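/- arXiv:1312.1523 — 3 statements merged into one kernel-verified Lean document; each statement's English description precedes it below -/
import Mathlib

section
/- Let t and k be positive integers with t ≥ 7 and 2 ≤ k ≤ ⌊t/2⌋ − 1, and let N = (2^k − 1)·2^{t+1−k}. Then the broadcast function satisfies B(N) ≤ (k+1)·N − (2t − k + 4)·2^{k−1} + t − k + 2. (The bound equals (k+1)N − (t − k/2 + 2)·2^k + t − k + 2.) -/
/-- A broadcast protocol from originator `u` completing in `b` time units:
a nondecreasing sequence of informed sets `I 0 = {u}`, `I b = univ`, where at each
step every newly informed vertex is called by a distinct previously informed neighbor. -/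
def IsBroadcastProtocol {V : Type*} (G : SimpleGraph V) (u : V) (b : ℕ) : Prop :=
  ∃ I : ℕ → Set V,
    I 0 = {u} ∧
    (∀ i, I i ⊆ I (i + 1)) ∧
    I b = Set.univ ∧
    ∀ i, ∃ f : (I (i + 1) \ I i : Set V) → (I i : Set V),
      Function.Injective f ∧ ∀ v, G.Adj (f v) v

/-- The broadcast time `b(u)`: the minimum number of time units needed to broadcast
from `u` to all vertices. -/
noncomputable def broadcastTime {V : Type*} (G : SimpleGraph V) (u : V) : ℕ :=
  sInf {b | IsBroadcastProtocol G u b}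

/-- The broadcast function `B(n)`: the minimum number of edges of a broadcast graph on
`n` vertices, i.e. a connected graph in which every vertex can broadcast within
`⌈log₂ n⌉` time units. -/
noncomputable def broadcastFunction (n : ℕ) : ℕ :=
  sInf {m | ∃ G : SimpleGraph (Fin n), G.Connected ∧ G.edgeSet.ncard = m ∧
    ∀ u, broadcastTime G u ≤ Nat.clog 2 n}

/-- A certificate (informing time `τ` and caller `p`) for a broadcast from `u` in time `b`. -/
def Cert {V : Type*} (G : SimpleGraph V) (u : V) (b : ℕ) (τ : V → ℕ) (p : V → V) : Prop :=
  τ u = 0 ∧ (∀ v, v ≠ u → G.Adj (p v) v ∧ τ (p v) < τ v) ∧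
  (∀ v w, v ≠ u → w ≠ u → τ v = τ w → p v = p w → v = w) ∧ ∀ v, τ v ≤ b

theorem Cert.protocol {V : Type*} {G : SimpleGraph V} {u : V} {b : ℕ} {τ : V → ℕ} {p : V → V}
    (h : Cert G u b τ p) : IsBroadcastProtocol G u b := by
  obtain ⟨h0, hp, hinj, hb⟩ := h
  have hne : ∀ v i, i < τ v → v ≠ u := by
    rintro v i hv rfl
    omega
  refine ⟨fun i => {v | τ v ≤ i}, ?_, ?_, ?_, ?_⟩
  · ext v
    simp only [Set.mem_setOf_eq, Set.mem_singleton_iff]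
    constructor
    · intro hv
      by_contra hvu
      have := (hp v hvu).2
      omega
    · rintro rfl
      omega
  · intro i v hv
    simp only [Set.mem_setOf_eq] at *
    omega
  · ext v
    simpa using hb v
  · intro i
    have key : ∀ v : ({v | τ v ≤ i + 1} \ {v | τ v ≤ i} : Set V), v.1 ≠ u ∧ τ v.1 = i + 1 := by
      rintro ⟨v, hv1, hv2⟩
      simp only [Set.mem_setOf_eq] at hv1 hv2
      exact ⟨hne v i (by omega), by simp only; omega⟩
    refine ⟨fun v => ⟨p v.1, ?_⟩, ?_, ?_⟩
    · have := (hp v.1 (key v).1).2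
      have := (key v).2
      simp only [Set.mem_setOf_eq]
      omega
    · intro v w hvw
      have := congrArg Subtype.val hvw
      exact Subtype.ext (hinj _ _ (key v).1 (key w).1 ((key v).2.trans (key w).2.symm) this)
    · intro v
      exact (hp v.1 (key v).1).1

theorem Cert.reachable {V : Type*} {G : SimpleGraph V} {u : V} {b : ℕ} {τ : V → ℕ} {p : V → V}
    (h : Cert G u b τ p) (v : V) : G.Reachable u v := by
  obtain ⟨h0, hp, hinj, hb⟩ := h
  induction hn : τ v using Nat.strong_induction_on generalizing v with
  | _ n ih =>
    by_cases hv : v = u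
    · subst hv
      exact SimpleGraph.Reachable.refl _
    · have := hp v hv
      exact (ih _ (hn ▸ this.2) _ rfl).trans this.1.reachable

theorem Cert.map {V W : Type*} {G : SimpleGraph V} {H : SimpleGraph W} (e : G ≃g H)
    {u : V} {b : ℕ} {τ : V → ℕ} {p : V → V}
    (h : Cert G u b τ p) : Cert H (e u) b (τ ∘ e.symm) (e ∘ p ∘ e.symm) := by
  obtain ⟨h0, hp, hinj, hb⟩ := h
  refine ⟨by simpa using h0, ?_, ?_, fun v => hb _⟩
  · intro v hv
    have hv' : e.symm v ≠ u := by
      rintro rfl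
      simp at hv
    have := hp _ hv'
    refine ⟨?_, by simpa using this.2⟩
    have h3 := e.map_adj_iff.2 this.1
    simpa using h3
  · intro v w hv hw h1 h2
    have hv' : e.symm v ≠ u := by
      rintro rfl
      simp at hv
    have hw' : e.symm w ≠ u := by
      rintro rfl
      simp at hw
    have := hinj _ _ hv' hw' h1 (by simpa using h2)
    simpa using this

theorem broadcastFunction_le_of_cert {V : Type*} [Fintype V] (n : ℕ) (hn : Fintype.card V = n)
    (hpos : 0 < n) (G : SimpleGraph V)
    (h : ∀ u, ∃ τ p, Cert G u (Nat.clog 2 n) τ p) : broadcastFunction n ≤ G.edgeSet.ncard := by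
  let e0 : V ≃ Fin n := Fintype.equivFinOfCardEq hn
  let H : SimpleGraph (Fin n) := G.map e0.toEmbedding
  let e : G ≃g H := SimpleGraph.Iso.map e0 G
  have hc : ∀ u, ∃ τ p, Cert H u (Nat.clog 2 n) τ p := by
    intro u
    obtain ⟨τ, p, hh⟩ := h (e.symm u)
    have := hh.map e
    rw [e.apply_symm_apply] at this
    exact ⟨_, _, this⟩
  apply Nat.sInf_le
  refine ⟨H, ?_, ?_, ?_⟩
  · haveI : Nonempty (Fin n) := ⟨⟨0, hpos⟩⟩
    refine SimpleGraph.Connected.mk ?_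
    intro a b
    obtain ⟨τ, p, hh⟩ := hc a
    exact hh.reachable b
  · exact (Set.ncard_congr' e.mapEdgeSet).symm
  · intro u
    obtain ⟨τ, p, hh⟩ := hc u
    exact Nat.sInf_le hh.protocol

namespace Construction

/-- Clear the top bit: the parent in the binomial tree. -/
def par (j : ℕ) : ℕ := j - 2 ^ (j.size - 1)

theorem size_bounds {j : ℕ} (hj : j ≠ 0) :
    1 ≤ j.size ∧ 2 ^ (j.size - 1) ≤ j ∧ j < 2 * 2 ^ (j.size - 1) := by
  have h1 : 1 ≤ j.size := Nat.size_pos.2 (Nat.pos_of_ne_zero hj)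
  have h2 : 2 ^ (j.size - 1) ≤ j := Nat.lt_size.1 (by omega)
  have h3 := Nat.lt_size_self j
  obtain ⟨m, hm⟩ : ∃ m, j.size = m + 1 := ⟨j.size - 1, by omega⟩
  rw [hm] at h3 h2 ⊢
  rw [pow_succ] at h3
  simp only [Nat.add_sub_cancel] at *
  omega

theorem par_le (j : ℕ) : par j ≤ j := Nat.sub_le _ _

theorem size_par_lt {j : ℕ} (hj : j ≠ 0) : (par j).size < j.size := by
  obtain ⟨h1, h2, h3⟩ := size_bounds hj
  have : (par j).size ≤ j.size - 1 := by
    rw [Nat.size_le]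
    unfold par
    omega
  omega

theorem par_inj {i j : ℕ} (hi : i ≠ 0) (hj : j ≠ 0) (hs : i.size = j.size) (h : par i = par j) :
    i = j := by
  obtain ⟨h1, h2, h3⟩ := size_bounds hi
  obtain ⟨h1', h2', h3'⟩ := size_bounds hj
  unfold par at h
  rw [hs] at h h2
  omega

variable {M d : ℕ}

/-- Vertices: side, position on the side, position in the binomial tree. -/
abbrev Vtx (M d : ℕ) := (Bool × ZMod M) × Fin (2 ^ d)

/-- The root of a tree. -/
def root (q : Bool × ZMod M) : Vtx M d := (q, ⟨0, by positivity⟩)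

/-- The root whose role the vertex plays as an originator. -/
def virt (v : Vtx M d) : Bool × ZMod M :=
  if v.2.1 ≠ 0 ∧ par v.2.1 = 0 then (!v.1.1, -v.1.2) else v.1

/-- The neighbour of a root in dimension `i`. -/
def nb (i : ℕ) (q : Bool × ZMod M) : Bool × ZMod M := (!q.1, 2 ^ i - 1 - q.2)

theorem nb_nb (i : ℕ) (q : Bool × ZMod M) : nb i (nb i q) = q := by
  unfold nb
  ext <;> simp

theorem nb_inj (i : ℕ) {q r : Bool × ZMod M} (h : nb i q = nb i r) : q = r := by
  rw [← nb_nb i q, h, nb_nb]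

/-- The tree parent of a vertex. -/
def tpar (v : Vtx M d) : Vtx M d := (v.1, ⟨par v.2.1, (par_le _).trans_lt v.2.2⟩)

/-- The generated edges. -/
def edge (k : ℕ) : Vtx M d × Option (Fin k) → Sym2 (Vtx M d)
  | (v, none) => s(v, tpar v)
  | (v, some i) => s(v, root (nb i (virt v)))

/-- The broadcast graph. -/
def graph (M d k : ℕ) : SimpleGraph (Vtx M d) := SimpleGraph.fromEdgeSet (Set.range (edge k))

/-- Relative position of a root with respect to the virtual originator `c`. -/
def rep (c q : Bool × ZMod M) : ℕ :=
  if q.1 = c.1 then (if q.2 = c.2 then M else (q.2 - c.2).val) else (q.2 + c.2).val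

open Classical in
/-- Informing time. -/
noncomputable def tau (k : ℕ) (u v : Vtx M d) : ℕ :=
  if v = u then 0 else if v.2.1 = 0 then (rep (virt u) v.1).size + 1 else k + 1 + v.2.1.size

open Classical in
/-- Place `q`, with the virtual originator replaced by `u`. -/
noncomputable def place (u : Vtx M d) (q : Bool × ZMod M) : Vtx M d :=
  if q = virt u then u else root q

open Classical in
/-- Caller. -/
noncomputable def caller (u v : Vtx M d) : Vtx M d :=
  if v.2.1 = 0 then place u (nb (rep (virt u) v.1).size v.1) else tpar v

theorem eq_root {v : Vtx M d} (h : v.2.1 = 0) : v = root v.1 := by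
  unfold root
  ext <;> simp [h]

theorem virt_root (q : Bool × ZMod M) : virt (root q : Vtx M d) = q := by
  simp [virt, root]

theorem place_inj (u : Vtx M d) {q r : Bool × ZMod M} (h : place u q = place u r) : q = r := by
  have key : ∀ q : Bool × ZMod M, (root q : Vtx M d) = u → q = virt u := by
    rintro q rfl
    rw [virt_root]
  unfold place at h
  split_ifs at h with h1 h2 h2
  · rw [h1, h2]
  · exact absurd (key _ h.symm) h2
  · exact absurd (key _ h) h1
  · exact congrArg Prod.fst h

variable {k : ℕ}

theorem two_pow_k (hM : M + 1 = 2 ^ k) : (2 : ZMod M) ^ k = 1 := by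
  have : ((M + 1 : ℕ) : ZMod M) = ((2 ^ k : ℕ) : ZMod M) := by rw [hM]
  push_cast at this
  simpa using this.symm

theorem rep_le [NeZero M] (c q : Bool × ZMod M) : rep c q ≤ M := by
  unfold rep
  split_ifs
  · exact le_rfl
  · exact (ZMod.val_lt _).le
  · exact (ZMod.val_lt _).le

theorem rep_size_le [NeZero M] (hM : M + 1 = 2 ^ k) (c q : Bool × ZMod M) :
    (rep c q).size ≤ k := by
  rw [Nat.size_le]
  have := rep_le c q
  omega

/-- Adjacency through dimension `i ≤ k`. -/
theorem mem_edge (hk : 0 < k) (hM : M + 1 = 2 ^ k) (u : Vtx M d) {i : ℕ} (hi : i ≤ k) :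
    s(u, root (nb i (virt u))) ∈ Set.range (edge (M := M) (d := d) k) := by
  rcases hi.lt_or_eq with h | rfl
  · exact ⟨(u, some ⟨i, h⟩), rfl⟩
  · refine ⟨(u, some ⟨0, hk⟩), ?_⟩
    simp [edge, nb, two_pow_k hM]

/-- The heart of the Knödel scheme: the caller has a smaller relative position. -/
theorem rep_nb_lt [NeZero M] (hM : M + 1 = 2 ^ k) (c q : Bool × ZMod M)
    (h : nb (rep c q).size q ≠ c) : (rep c (nb (rep c q).size q)).size < (rep c q).size := by
  set n := rep c q with hn
  have hnM : n ≤ M := rep_le c q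
  -- position equation
  have hpos : q.2 = (if q.1 = c.1 then c.2 else -c.2) + (n : ZMod M) := by
    rw [hn]
    unfold rep
    split_ifs with h1 h2
    · simp [h2]
    · rw [ZMod.natCast_zmod_val]; ring
    · rw [ZMod.natCast_zmod_val]; ring
  have hlt := Nat.lt_size_self n
  by_cases hn0 : n = 0
  · exfalso
    apply h
    have hs : q.1 ≠ c.1 := by
      intro hs
      have hM0 : M ≠ 0 := NeZero.ne M
      rw [hn0] at hn
      unfold rep at hn
      rw [if_pos hs] at hn
      split_ifs at hn with h2
      · exact hM0 hn.symm
      · have := (ZMod.val_eq_zero _).1 hn.symm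
        exact h2 (sub_eq_zero.1 this)
    rw [if_neg hs, hn0] at hpos
    rw [hn0]
    unfold nb
    ext
    · simp only
      cases hq : q.1 <;> cases hc : c.1 <;> simp_all
    · simp [hpos]
  · obtain ⟨h1, h2, h3⟩ := size_bounds hn0
    set w := 2 ^ n.size - 1 - n with hw
    have h2n : 2 ^ n.size = 2 * 2 ^ (n.size - 1) := by
      obtain ⟨m, hm⟩ : ∃ m, n.size = m + 1 := ⟨n.size - 1, by omega⟩
      rw [hm, pow_succ, Nat.add_sub_cancel, mul_comm]
    have hwlt : w < 2 ^ (n.size - 1) := by omega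
    have hwM : w < M := by omega
    have hsum : w + n + 1 = 2 ^ n.size := by omega
    have hcast : (w : ZMod M) = 2 ^ n.size - 1 - n := by
      have : ((w + n + 1 : ℕ) : ZMod M) = ((2 ^ n.size : ℕ) : ZMod M) := by rw [hsum]
      push_cast at this
      rw [← this]; ring
    have hval : (w : ZMod M).val = w := ZMod.val_cast_of_lt hwM
    have : rep c (nb n.size q) = w := by
      by_cases hs : q.1 = c.1
      · rw [if_pos hs] at hpos
        have hs' : (!q.1) ≠ c.1 := by rw [hs]; simp
        unfold rep nb
        simp only
        rw [if_neg hs', ← hval]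
        congr 1
        rw [hcast, hpos]; ring
      · rw [if_neg hs] at hpos
        have hs' : (!q.1) = c.1 := by
          cases hq : q.1 <;> cases hc : c.1 <;> simp_all
        have hx : (2 ^ n.size - 1 - q.2) - c.2 = (w : ZMod M) := by
          rw [hcast, hpos]; ring
        have hne : (2 ^ n.size - 1 - q.2 : ZMod M) ≠ c.2 := by
          intro hh
          exact h (Prod.ext hs' hh)
        unfold rep nb
        simp only
        rw [if_pos hs', if_neg hne, hx, hval]
    rw [this]
    have : w.size ≤ n.size - 1 := Nat.size_le.2 hwlt
    omega

theorem cert [NeZero M] (hk : 0 < k) (hM : M + 1 = 2 ^ k) (u : Vtx M d) :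
    Cert (graph M d k) u (k + d + 1) (tau k u) (caller u) := by
  have hroot : ∀ v : Vtx M d, v ≠ u → v.2.1 = 0 → tau k u v = (rep (virt u) v.1).size + 1 := by
    intro v h1 h2
    simp [tau, h1, h2]
  have hnon : ∀ v : Vtx M d, v ≠ u → v.2.1 ≠ 0 → tau k u v = k + 1 + v.2.1.size := by
    intro v h1 h2
    unfold tau
    rw [if_neg h1, if_neg h2]
  have hu : tau k u u = 0 := by simp [tau]
  have hlt : ∀ v, v ≠ u → tau k u (caller u v) < tau k u v := by
    intro v hv
    by_cases h0 : v.2.1 = 0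
    · rw [hroot v hv h0]
      unfold caller
      rw [if_pos h0]
      unfold place
      split_ifs with h1
      · omega
      · have := rep_nb_lt hM _ _ h1
        by_cases h2 : root (nb (rep (virt u) v.1).size v.1) = u
        · rw [h2]; omega
        · rw [hroot _ h2 rfl]
          exact Nat.add_lt_add_right this 1
    · rw [hnon v hv h0]
      unfold caller
      rw [if_neg h0]
      by_cases h2 : tpar v = u
      · rw [h2]; omega
      · have h4 := (size_bounds h0).1
        by_cases h3 : (tpar v).2.1 = 0
        · rw [hroot _ h2 h3]
          have := rep_size_le hM (virt u) (tpar v).1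
          omega
        · rw [hnon _ h2 h3]
          have : (tpar v).2.1.size < v.2.1.size := size_par_lt h0
          omega
  refine ⟨hu, ?_, ?_, ?_⟩
  · intro v hv
    refine ⟨?_, hlt v hv⟩
    unfold graph
    rw [SimpleGraph.fromEdgeSet_adj]
    refine ⟨?_, ?_⟩
    · unfold caller
      split_ifs with h0
      · have hs := rep_size_le hM (virt u) v.1
        set i := (rep (virt u) v.1).size
        unfold place
        split_ifs with h1
        · have := mem_edge hk hM u hs
          rw [← h1, nb_nb, ← eq_root h0] at this
          exact this
        · have := mem_edge hk hM (root (nb i v.1) : Vtx M d) hs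
          rw [virt_root, nb_nb, ← eq_root h0] at this
          exact this
      · exact ⟨(v, none), Sym2.eq_swap⟩
    · intro h
      have := hlt v hv
      rw [h] at this
      exact lt_irrefl _ this
  · intro v w hv hw ht hc
    by_cases h0 : v.2.1 = 0 <;> by_cases h0' : w.2.1 = 0
    · rw [hroot v hv h0, hroot w hw h0'] at ht
      have ht' : (rep (virt u) v.1).size = (rep (virt u) w.1).size := by omega
      unfold caller at hc
      rw [if_pos h0, if_pos h0', ht'] at hc
      have := nb_inj _ (place_inj u hc)
      rw [eq_root h0, eq_root h0', this]
    · rw [hroot v hv h0, hnon w hw h0'] at ht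
      have := rep_size_le hM (virt u) v.1
      have := (size_bounds h0').1
      omega
    · rw [hnon v hv h0, hroot w hw h0'] at ht
      have := rep_size_le hM (virt u) w.1
      have := (size_bounds h0).1
      omega
    · rw [hnon v hv h0, hnon w hw h0'] at ht
      unfold caller at hc
      rw [if_neg h0, if_neg h0'] at hc
      have h1 : (tpar v).1 = (tpar w).1 := by rw [hc]
      have h2 : (tpar v).2.1 = (tpar w).2.1 := by rw [hc]
      exact Prod.ext h1 (Fin.ext (par_inj h0 h0' (by omega) h2))
  · intro v
    by_cases hv : v = u
    · rw [hv, hu]; omega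
    · by_cases h0 : v.2.1 = 0
      · rw [hroot v hv h0]
        have := rep_size_le hM (virt u) v.1
        omega
      · rw [hnon v hv h0]
        have : v.2.1.size ≤ d := Nat.size_le.2 v.2.2
        omega

theorem par_two_pow (a : ℕ) : par (2 ^ a) = 0 := by
  unfold par
  rw [Nat.size_pow, Nat.add_sub_cancel, Nat.sub_self]

/-- The redundant generated edges. -/
def bad (hk : 0 < k) : (Bool × ZMod M) × Option (Fin d) → Vtx M d × Option (Fin k)
  | (q, none) => (root q, none)
  | (q, some a) => ((q, ⟨2 ^ a.1, Nat.pow_lt_pow_right (by norm_num) a.2⟩), some ⟨0, hk⟩)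

theorem bad_inj (hk : 0 < k) : Function.Injective (bad (M := M) (d := d) hk) := by
  rintro ⟨q, a⟩ ⟨r, b⟩ h
  cases a <;> cases b <;> simp [bad, root] at h ⊢
  · exact h
  · refine ⟨h.1, ?_⟩
    exact Fin.ext h.2

theorem edge_bad (hk : 0 < k) (z) (h : ¬ (edge k (bad (M := M) (d := d) hk z)).IsDiag) :
    ∃ v, edge k (bad (M := M) (d := d) hk z) = edge k (v, none) ∧ v.2.1 ≠ 0 := by
  obtain ⟨q, a⟩ := z
  cases a with
  | none =>
    exfalso
    apply h
    simp [bad, edge, tpar, root, par]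
  | some a =>
    refine ⟨(q, ⟨2 ^ a.1, Nat.pow_lt_pow_right (by norm_num) a.2⟩), ?_, by simp⟩
    simp [bad, edge, tpar, root, par_two_pow, virt, nb]

theorem ncard_le [NeZero M] (hk : 0 < k) :
    (graph M d k).edgeSet.ncard + 2 * M * (d + 1) ≤ 2 * M * 2 ^ d * (k + 1) := by
  classical
  have hsub : (graph M d k).edgeSet ⊆ edge k '' (Set.range (bad (M := M) (d := d) hk))ᶜ := by
    intro x hx
    unfold graph at hx
    rw [SimpleGraph.edgeSet_fromEdgeSet] at hx
    obtain ⟨⟨y, rfl⟩, hd⟩ := hx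
    have hd' : ¬ (edge k y).IsDiag := hd
    by_cases hy : y ∈ Set.range (bad (M := M) (d := d) hk)
    · obtain ⟨z, rfl⟩ := hy
      obtain ⟨v, h1, h2⟩ := edge_bad hk z hd'
      refine ⟨(v, none), ?_, h1.symm⟩
      rintro ⟨⟨q, a⟩, h⟩
      cases a with
      | none =>
        apply h2
        simp only [bad, Prod.mk.injEq, and_true] at h
        rw [← h]
        rfl
      | some a => simp [bad] at h
    · exact ⟨y, hy, rfl⟩
  have h1 := Set.ncard_le_ncard hsub (Set.toFinite _)
  have h2 := Set.ncard_image_le (f := edge k)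
    (Set.toFinite (Set.range (bad (M := M) (d := d) hk))ᶜ)
  have h3 := Set.ncard_add_ncard_compl (Set.range (bad (M := M) (d := d) hk))
  have h4 : (Set.range (bad (M := M) (d := d) hk)).ncard = 2 * M * (d + 1) := by
    rw [← Set.image_univ, Set.ncard_image_of_injective _ (bad_inj hk), Set.ncard_univ]
    simp [Nat.card_eq_fintype_card, ZMod.card]
  have h5 : Nat.card (Vtx M d × Option (Fin k)) = 2 * M * 2 ^ d * (k + 1) := by
    simp [Nat.card_eq_fintype_card, ZMod.card]
  omega

end Construction

/-- For `t ≥ 7`, `2 ≤ k ≤ ⌊t/2⌋ - 1` and `N = (2^k - 1)·2^(t+1-k)`, the broadcast function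
satisfies `B(N) ≤ (k+1)·N - (2t - k + 4)·2^(k-1) + t - k + 2`
(which equals `(k+1)·N - (t - k/2 + 2)·2^k + t - k + 2`). -/
theorem broadcastFunction_le_of_N (t k N : ℕ) (ht : 7 ≤ t) (hk : 2 ≤ k)
    (hk' : k ≤ t / 2 - 1) (hN : N = (2 ^ k - 1) * 2 ^ (t + 1 - k)) :
    (broadcastFunction N : ℤ) ≤
      (k + 1) * N - (2 * t - k + 4) * 2 ^ (k - 1) + t - k + 2 := by
  obtain ⟨d, rfl⟩ : ∃ d, t = k + d := ⟨t - k, by omega⟩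
  obtain ⟨P, hP⟩ : ∃ P, P = 2 ^ (k - 1) := ⟨_, rfl⟩
  have h2k : 2 ^ k = 2 * P := by
    obtain ⟨m, rfl⟩ : ∃ m, k = m + 1 := ⟨k - 1, by omega⟩
    rw [hP, pow_succ, Nat.add_sub_cancel, mul_comm]
  have hP2 : 2 ≤ P := by
    rw [hP]
    calc 2 = 2 ^ 1 := rfl
      _ ≤ 2 ^ (k - 1) := Nat.pow_le_pow_right (by norm_num) (by omega)
  obtain ⟨M, hM⟩ : ∃ M, M + 1 = 2 ^ k := ⟨2 ^ k - 1, by omega⟩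
  have hM3 : 3 ≤ M := by omega
  haveI : NeZero M := ⟨by omega⟩
  have hN' : N = 2 * M * 2 ^ d := by
    have e1 : k + d + 1 - k = d + 1 := by omega
    have e2 : 2 ^ k - 1 = M := by omega
    rw [hN, e1, e2, pow_succ]; ring
  have hD : 0 < 2 ^ d := by positivity
  have hclog : k + d + 1 ≤ Nat.clog 2 N := by
    have : 2 ^ (k + d) < N := by
      rw [hN', pow_add]
      exact Nat.mul_lt_mul_of_pos_right (by omega) hD
    exact (Nat.lt_clog_iff_pow_lt (by norm_num)).2 this
  have hle : broadcastFunction N ≤ (Construction.graph M d k).edgeSet.ncard := by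
    apply broadcastFunction_le_of_cert
    · rw [hN']
      simp [ZMod.card]
    · rw [hN']
      positivity
    · intro u
      obtain ⟨a, b, c, e⟩ := Construction.cert (d := d) (by omega : 0 < k) hM u
      exact ⟨_, _, a, b, c, fun v => (e v).trans hclog⟩
  have hcard := Construction.ncard_le (M := M) (d := d) (by omega : 0 < k)
  rw [← hN'] at hcard
  have h6 : (broadcastFunction N : ℤ) + 2 * M * (d + 1) ≤ N * (k + 1) := by
    exact_mod_cast (Nat.add_le_add_right hle _).trans hcard
  have h7 : (M : ℤ) = 2 * P - 1 := by
    have : M + 1 = 2 * P := by omega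
    have : (M : ℤ) + 1 = 2 * P := by exact_mod_cast this
    linarith
  have h8 : ((2 : ℤ)) ^ (k - 1) = P := by rw [hP]; push_cast; rfl
  rw [h8]
  rw [h7] at h6
  push_cast
  have h9 : (k : ℤ) + 2 ≤ d := by
    have : k + 2 ≤ d := by omega
    exact_mod_cast this
  have h10 : (2 : ℤ) ≤ P := by exact_mod_cast hP2
  nlinarith [mul_nonneg (sub_nonneg.2 h10) (sub_nonneg.2 h9)]
end

section
/- Let t, k, n be positive integers with t ≥ 7, 2 ≤ k ≤ ⌊t/2⌋ − 1, and let N = (2^k − 1)·2^{t+1−k}. Suppose 2^t < n < N. Set d = N − n, x = ⌊d / 2^{t+1−k}⌋, and p = ⌊log₂(x+1)⌋ if x > 0 and p = 0 if x = 0. Then the broadcast function satisfies B(n) ≤ (k + 1 − p)·n − (2t − k + 2p + 4)·2^{k−1} + t − k − (p − 2)·2^p. (The bound equals (k+1−p)n − (t − k/2 + p + 2)·2^k + t − k − (p−2)·2^p.) -/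
/-- A graph given by an edge finset `E` on a finite vertex set `W`, such that every originator has
a time/parent labelling, bounds the broadcast function. -/
lemma broadcastFunction_le_of_labelling {V0 : Type*} [DecidableEq V0] (W : Finset V0)
    (E : Finset (Sym2 V0)) (b : ℕ) (hne : W.Nonempty) (hb : b ≤ Nat.clog 2 W.card)
    (h : ∀ u ∈ W, ∃ (τ : V0 → ℕ) (par : V0 → V0), τ u = 0 ∧
      (∀ v ∈ W, v ≠ u → par v ∈ W ∧ s(par v, v) ∈ E ∧ τ v ≤ b ∧ τ (par v) < τ v) ∧
      (∀ v ∈ W, ∀ w ∈ W, v ≠ u → w ≠ u → par v = par w → τ v = τ w → v = w)) :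
    broadcastFunction W.card ≤ E.card := by
  classical
  let φ : Fin W.card ≃ W := W.equivFin.symm
  let G : SimpleGraph (Fin W.card) :=
    { Adj := fun a c => a ≠ c ∧ s((φ a : V0), (φ c : V0)) ∈ E
      symm := ⟨fun a c hac => ⟨hac.1.symm, by rw [Sym2.eq_swap]; exact hac.2⟩⟩
      loopless := ⟨fun a ha => ha.1 rfl⟩ }
  have hcard : G.edgeSet.ncard ≤ E.card := by
    rw [← Set.ncard_coe_finset E]
    apply Set.ncard_le_ncard_of_injOn (Sym2.map (fun a => (φ a : V0)))
    · intro e he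
      induction e using Sym2.ind with
      | _ x y => exact he.2
    · apply Function.Injective.injOn
      apply Sym2.map.injective
      intro x y hxy
      exact φ.injective (Subtype.ext hxy)
  have hlab : ∀ u : Fin W.card, ∃ (τ : Fin W.card → ℕ) (par : Fin W.card → Fin W.card), τ u = 0 ∧
      (∀ v, v ≠ u → G.Adj (par v) v ∧ τ v ≤ b ∧ τ (par v) < τ v) ∧
      (∀ v w, v ≠ u → w ≠ u → par v = par w → τ v = τ w → v = w) := by
    intro u
    obtain ⟨τ, par, h0, h1, h2⟩ := h (φ u) (φ u).2
    have hx : ∀ v, v ≠ u → (φ v : V0) ≠ φ u := fun v hv hh => hv (φ.injective (Subtype.ext hh))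
    refine ⟨fun v => τ (φ v),
      fun v => if hv : par (φ v) ∈ W then φ.symm ⟨par (φ v), hv⟩ else u, h0, ?_, ?_⟩
    · intro v hv
      obtain ⟨a1, a2, a3, a4⟩ := h1 (φ v) (φ v).2 (hx v hv)
      simp only [a1, dif_pos, Equiv.apply_symm_apply]
      refine ⟨⟨?_, by simpa using a2⟩, a3, a4⟩
      intro hh
      have : par (φ v) = φ v := by
        conv_rhs => rw [← hh]
        simp
      rw [this] at a4
      exact lt_irrefl _ a4
    · intro v w hv hw hp ht
      obtain ⟨a1, -⟩ := h1 (φ v) (φ v).2 (hx v hv)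
      obtain ⟨b1, -⟩ := h1 (φ w) (φ w).2 (hx w hw)
      simp only [a1, b1, dif_pos] at hp
      have hp' := congrArg Subtype.val (φ.symm.injective hp)
      exact φ.injective (Subtype.ext (h2 _ (φ v).2 _ (φ w).2 (hx v hv) (hx w hw) hp' ht))
  have hbt : ∀ u, broadcastTime G u ≤ Nat.clog 2 W.card := by
    intro u
    refine le_trans (Nat.sInf_le ?_) hb
    obtain ⟨τ, par, h0, h1, h2⟩ := hlab u
    refine ⟨fun i => {v | τ v ≤ i}, ?_, ?_, ?_, ?_⟩
    · ext v
      simp only [Set.mem_ofPred_eq, Set.mem_singleton_iff]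
      constructor
      · intro hv
        by_contra hne
        have := (h1 v hne).2.2
        omega
      · rintro rfl; omega
    · intro i v hv
      simp only [Set.mem_ofPred_eq] at *
      omega
    · ext v
      simp only [Set.mem_ofPred_eq, Set.mem_univ, iff_true]
      by_cases hv : v = u
      · subst hv; omega
      · exact (h1 v hv).2.1
    · intro i
      have key : ∀ v : ({v | τ v ≤ i + 1} \ {v | τ v ≤ i} : Set (Fin W.card)),
          (v : Fin W.card) ≠ u ∧ τ v = i + 1 := by
        rintro ⟨v, hv1, hv2⟩
        simp only [Set.mem_ofPred_eq] at hv1 hv2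
        refine ⟨?_, by simp only; omega⟩
        intro hvu
        change v = u at hvu
        rw [hvu, h0] at hv2
        omega
      refine ⟨fun v => ⟨par v, ?_⟩, ?_, ?_⟩
      · have := (h1 v (key v).1).2.2
        have := (key v).2
        simp only [Set.mem_ofPred_eq]
        omega
      · intro v w hvw
        apply Subtype.ext
        apply h2 _ _ (key v).1 (key w).1 (congrArg Subtype.val hvw)
        rw [(key v).2, (key w).2]
      · intro v
        exact (h1 v (key v).1).1
  have hpos : 0 < W.card := hne.card_pos
  have hconn : G.Connected := by
    have : Nonempty (Fin W.card) := ⟨⟨0, hpos⟩⟩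
    refine SimpleGraph.Connected.mk ?_
    intro u w
    obtain ⟨τ, par, h0, h1, h2⟩ := hlab u
    have : ∀ m v, τ v ≤ m → G.Reachable u v := by
      intro m
      induction m with
      | zero =>
        intro v hv
        by_cases hvu : v = u
        · subst hvu; rfl
        · have := (h1 v hvu).2.2
          omega
      | succ m ih =>
        intro v hv
        by_cases hvu : v = u
        · subst hvu; rfl
        · have := h1 v hvu
          exact (ih (par v) (by omega)).trans this.1.reachable
    exact this _ w le_rfl
  exact le_trans (Nat.sInf_le ⟨G, hconn, rfl, hbt⟩) hcard

/-- Down-closed vertex sets of prescribed size. -/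
lemma exists_downclosed {V0 : Type*} [DecidableEq V0] (F B : Finset V0) (par : V0 → V0)
    (rank : V0 → ℕ) (hBF : B ⊆ F) (hF : ∀ v ∈ F, v ∉ B → par v ∈ F ∧ rank (par v) < rank v)
    (n : ℕ) (h1 : B.card ≤ n) (h2 : n ≤ F.card) :
    ∃ W, B ⊆ W ∧ W ⊆ F ∧ W.card = n ∧ ∀ v ∈ W, v ∉ B → par v ∈ W := by
  induction h : F.card - n generalizing n with
  | zero => exact ⟨F, hBF, subset_rfl, by omega, fun v hv hb => (hF v hv hb).1⟩
  | succ m ih =>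
    obtain ⟨W, hB, hWF, hc, hd⟩ := ih (n + 1) (by omega) (by omega) (by omega)
    have hne : (W \ B).Nonempty := by
      rw [← Finset.card_pos, Finset.card_sdiff_of_subset hB]
      omega
    obtain ⟨w, hw, hmax⟩ := Finset.exists_max_image (W \ B) rank hne
    rw [Finset.mem_sdiff] at hw
    refine ⟨W.erase w, ?_, (Finset.erase_subset _ _).trans hWF, ?_, ?_⟩
    · intro v hv
      rw [Finset.mem_erase]
      exact ⟨fun hh => hw.2 (hh ▸ hv), hB hv⟩
    · rw [Finset.card_erase_of_mem hw.1]; omega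
    · intro v hv hvB
      rw [Finset.mem_erase] at hv ⊢
      refine ⟨?_, hd v hv.2 hvB⟩
      intro hh
      have h3 := hmax v (Finset.mem_sdiff.2 ⟨hv.2, hvB⟩)
      have h4 := (hF v (hWF hv.2) hvB).2
      rw [hh] at h4
      omega

lemma exists_argmax {α : Type*} [Nonempty α] (pos : α → ℕ) :
    ∃ L : Finset α → α, ∀ D, D.Nonempty → L D ∈ D ∧ ∀ j ∈ D, pos j ≤ pos (L D) := by
  have : ∀ D : Finset α, ∃ l, D.Nonempty → l ∈ D ∧ ∀ j ∈ D, pos j ≤ pos l := by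
    intro D
    by_cases hD : D.Nonempty
    · obtain ⟨l, hl, hm⟩ := Finset.exists_max_image D pos hD
      exact ⟨l, fun _ => ⟨hl, hm⟩⟩
    · exact ⟨Classical.arbitrary α, fun h => absurd h hD⟩
  choose L hL using this
  exact ⟨L, hL⟩

/-- Flip the last coordinate in which `r` differs from the base point `b`. -/
lemma exists_flip {K : ℕ} (hK : 0 < K) (pos : Equiv.Perm (Fin K)) :
    ∃ L : Finset (Fin K) → Finset (Fin K) → Fin K,
      ∀ b r, r ≠ b → (L b r ∈ symmDiff r b) ∧
        (∀ j, (j ∈ symmDiff r b) → (pos j).val ≤ (pos (L b r)).val) ∧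
        (symmDiff r {L b r} ≠ b →
          (pos (L b (symmDiff r {L b r}))).val < (pos (L b r)).val) := by
  have : Nonempty (Fin K) := ⟨⟨0, hK⟩⟩
  obtain ⟨L, hL⟩ := exists_argmax (fun j : Fin K => (pos j).val)
  have hne : ∀ b r : Finset (Fin K), r ≠ b → (symmDiff r b).Nonempty := by
    intro b r h
    rw [Finset.nonempty_iff_ne_empty]
    intro h2
    exact h (symmDiff_eq_bot.1 h2)
  refine ⟨fun b r => L (symmDiff r b), fun b r h => ?_⟩
  obtain ⟨h1, h2⟩ := hL _ (hne b r h)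
  refine ⟨h1, h2, fun h3 => ?_⟩
  obtain ⟨h4, -⟩ := hL _ (hne b _ h3)
  set l := L (symmDiff r b)
  set l' := L (symmDiff (symmDiff r {l}) b)
  have h5 : l' ∈ symmDiff r b ∧ l' ≠ l := by
    simp only [Finset.mem_symmDiff, Finset.mem_singleton] at h4 h1 ⊢
    by_cases hll : l' = l
    · rw [hll] at h4
      tauto
    · tauto
  have h6 := h2 _ h5.1
  have h7 : (pos l').val ≠ (pos l).val := fun hh => h5.2 (pos.injective (Fin.ext hh))
  exact lt_of_le_of_ne h6 h7

/-- A scheme which informs all the roots in `R` within `K` rounds. `none` is the originator. -/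
def RootScheme {K : ℕ} (R : Finset (Fin K) → Prop) (Nbr : Finset (Fin K) → Prop)
    (τ : Finset (Fin K) → ℕ) (par : Finset (Fin K) → Option (Finset (Fin K))) : Prop :=
  (∀ r, R r → 1 ≤ τ r ∧ τ r ≤ K ∧ (par r = none → Nbr r) ∧
    (∀ r', par r = some r' → R r' ∧ τ r' < τ r ∧ ∃ j, r' = symmDiff r {j})) ∧
  (∀ r r', R r → R r' → par r = par r' → τ r = τ r' → r = r')

lemma symmDiff_single_cancel {K : ℕ} {r r' : Finset (Fin K)} {j : Fin K}
    (h : symmDiff r {j} = symmDiff r' {j}) : r = r' := symmDiff_left_injective _ h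

/-- Scheme for an originator that is itself a root. -/
lemma rootScheme_root {K q : ℕ} (r0 : Finset (Fin K)) (i : Fin K) (hi : i ∈ r0)
    (hiq : i.val < q) :
    ∃ τ par, RootScheme (fun r : Finset (Fin K) => (∃ j ∈ r, j.val < q) ∧ r ≠ r0)
      (fun r => ∃ j, r0 = symmDiff r {j}) τ par := by
  have hK : 0 < K := by have := i.2; omega
  let pos : Equiv.Perm (Fin K) := Equiv.swap i ⟨K - 1, by omega⟩
  have hpos : ∀ j, (pos j).val ≤ (pos i).val := by
    intro j
    have : pos i = ⟨K - 1, by omega⟩ := Equiv.swap_apply_left _ _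
    rw [this]
    have := (pos j).2
    simp only; omega
  obtain ⟨L, hL⟩ := exists_flip hK pos
  refine ⟨fun r => (pos (L r0 r)).val + 1,
    fun r => if symmDiff r {L r0 r} = r0 then none else some (symmDiff r {L r0 r}), ?_, ?_⟩
  · rintro r ⟨hr, hr0⟩
    obtain ⟨h1, h2, h3⟩ := hL r0 r hr0
    have := (pos (L r0 r)).2
    refine ⟨Nat.le_add_left _ _, this, ?_, ?_⟩
    · intro h
      by_cases hc : symmDiff r {L r0 r} = r0
      · exact ⟨_, hc.symm⟩
      · simp [hc] at h
    · intro r' h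
      by_cases hc : symmDiff r {L r0 r} = r0
      · simp [hc] at h
      · simp only [hc, if_false, Option.some.injEq] at h
        subst h
        refine ⟨⟨⟨i, ?_, hiq⟩, hc⟩, Nat.succ_lt_succ (h3 hc), _, rfl⟩
        by_cases hir : i ∈ r
        · have hne : i ≠ L r0 r := by
            intro hh
            rw [← hh] at h1
            simp only [Finset.mem_symmDiff] at h1
            tauto
          simp [Finset.mem_symmDiff, hir, hne]
        · have h4 := h2 i (by simp only [Finset.mem_symmDiff]; tauto)
          have h5 := hpos (L r0 r)
          have : i = L r0 r := pos.injective (Fin.ext (le_antisymm h4 h5))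
          rw [← this]
          simp [Finset.mem_symmDiff, hir]
  · rintro r r' ⟨hr, hr0⟩ ⟨hr', hr0'⟩ hp ht
    have hl : L r0 r = L r0 r' := pos.injective (Fin.ext (by simpa using ht))
    simp only [hl] at hp
    by_cases hc : symmDiff r {L r0 r'} = r0 <;> by_cases hc' : symmDiff r' {L r0 r'} = r0
    · exact symmDiff_single_cancel (hc.trans hc'.symm)
    · simp [hc, hc'] at hp
    · simp [hc, hc'] at hp
    · simp only [hc, hc', if_false, Option.some.injEq] at hp
      exact symmDiff_single_cancel hp

/-- Spreading from the (missing) point `∅`: either the parent is `∅` and `r` is a top singleton, or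
the parent is again a root. -/
lemma flip_empty {K q : ℕ} (pos : Equiv.Perm (Fin K))
    (hpos : ∀ a b : Fin K, a.val < q → q ≤ b.val → (pos a).val < (pos b).val)
    (r : Finset (Fin K)) (hr : ∃ j ∈ r, j.val < q) (l : Fin K) (hl : l ∈ symmDiff r ∅)
    (hmax : ∀ j, (j ∈ symmDiff r ∅) → (pos j).val ≤ (pos l).val) :
    (symmDiff r {l} = ∅ → l.val < q ∧ r = {l}) ∧
    (symmDiff r {l} ≠ ∅ → ∃ j ∈ symmDiff r {l}, j.val < q) := by
  have hb : symmDiff r ∅ = r := symmDiff_bot r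
  rw [hb] at hl hmax
  constructor
  · intro h
    have : r = {l} := symmDiff_eq_bot.1 h
    obtain ⟨j, hj, hjq⟩ := hr
    refine ⟨?_, this⟩
    rw [this, Finset.mem_singleton] at hj
    rw [← hj]; exact hjq
  · intro h
    by_cases hlq : l.val < q
    · obtain ⟨j, hj⟩ := Finset.nonempty_iff_ne_empty.2 h
      refine ⟨j, hj, ?_⟩
      simp only [Finset.mem_symmDiff, Finset.mem_singleton] at hj
      have hjr : j ∈ r := by
        rcases hj with hj | hj
        · exact hj.1
        · rw [hj.1] at hj; tauto
      by_contra hjq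
      have h1 := hpos l j hlq (by omega)
      have h2 := hmax j hjr
      omega
    · obtain ⟨j, hj, hjq⟩ := hr
      refine ⟨j, ?_, hjq⟩
      have : j ≠ l := by rintro rfl; exact hlq hjq
      simp [Finset.mem_symmDiff, hj, this]

/-- Scheme for an originator adjacent to all top singletons. -/
lemma rootScheme_ext {K q : ℕ} (hK : 0 < K) :
    ∃ τ par, RootScheme (fun r : Finset (Fin K) => (∃ j ∈ r, j.val < q))
      (fun r => ∃ j : Fin K, j.val < q ∧ r = {j}) τ par := by
  let pos : Equiv.Perm (Fin K) := Equiv.refl _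
  have hpos : ∀ a b : Fin K, a.val < q → q ≤ b.val → (pos a).val < (pos b).val := by
    intro a b h1 h2
    simp only [pos, Equiv.refl_apply]
    omega
  obtain ⟨L, hL⟩ := exists_flip hK pos
  have hne : ∀ r : Finset (Fin K), (∃ j ∈ r, j.val < q) → r ≠ ∅ := by
    rintro r ⟨j, hj, -⟩ rfl
    simp at hj
  refine ⟨fun r => (pos (L ∅ r)).val + 1,
    fun r => if symmDiff r {L ∅ r} = ∅ then none else some (symmDiff r {L ∅ r}), ?_, ?_⟩
  · intro r hr
    obtain ⟨h1, h2, h3⟩ := hL ∅ r (hne r hr)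
    have := (pos (L ∅ r)).2
    obtain ⟨h4, h5⟩ := flip_empty pos hpos r hr _ h1 h2
    refine ⟨Nat.le_add_left _ _, this, ?_, ?_⟩
    · intro h
      by_cases hc : symmDiff r {L ∅ r} = ∅
      · exact ⟨_, h4 hc⟩
      · simp [hc] at h
    · intro r' h
      by_cases hc : symmDiff r {L ∅ r} = ∅
      · simp [hc] at h
      · simp only [hc, if_false, Option.some.injEq] at h
        subst h
        exact ⟨h5 hc, Nat.succ_lt_succ (h3 hc), _, rfl⟩
  · intro r r' hr hr' hp ht
    have hl : L ∅ r = L ∅ r' := pos.injective (Fin.ext (by simpa using ht))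
    simp only [hl] at hp
    by_cases hc : symmDiff r {L ∅ r'} = ∅ <;> by_cases hc' : symmDiff r' {L ∅ r'} = ∅
    · exact symmDiff_single_cancel (hc.trans hc'.symm)
    · simp [hc, hc'] at hp
    · simp [hc, hc'] at hp
    · simp only [hc, hc', if_false, Option.some.injEq] at hp
      exact symmDiff_single_cancel hp

/-- Scheme for a child of the root `r0`, adjacent to `r0` and all top singletons but `i`. -/
lemma rootScheme_child {K q : ℕ} (r0 : Finset (Fin K)) (i : Fin K) (hi : i ∈ r0)
    (hiq : i.val < q) :
    ∃ τ par, RootScheme (fun r : Finset (Fin K) => (∃ j ∈ r, j.val < q))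
      (fun r => r = r0 ∨ ∃ j : Fin K, j.val < q ∧ j ≠ i ∧ r = {j}) τ par := by
  have hK : 0 < K := by have := i.2; omega
  let z : Fin K := ⟨0, hK⟩
  let pos : Equiv.Perm (Fin K) := Equiv.swap i z
  have hpi : (pos i).val = 0 := by
    have : pos i = z := Equiv.swap_apply_left _ _
    rw [this]
  have hpos0 : ∀ j, j ≠ i → 0 < (pos j).val := by
    intro j hj
    by_contra h
    exact hj (pos.injective (Fin.ext (by omega)))
  have hpos : ∀ a b : Fin K, a.val < q → q ≤ b.val → (pos a).val < (pos b).val := by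
    intro a b h1 h2
    have hb : pos b = b := by
      apply Equiv.swap_apply_of_ne_of_ne
      · rintro rfl; omega
      · intro h; have := congrArg Fin.val h; simp only [z] at this; omega
    rw [hb]
    by_cases ha : a = i
    · rw [ha, hpi]; omega
    · by_cases haz : a = z
      · have : pos a = i := by rw [haz]; exact Equiv.swap_apply_right _ _
        rw [this]; omega
      · have : pos a = a := Equiv.swap_apply_of_ne_of_ne ha haz
        rw [this]; omega
  obtain ⟨L, hL⟩ := exists_flip hK pos
  have hne : ∀ r : Finset (Fin K), (∃ j ∈ r, j.val < q) → r ≠ ∅ := by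
    rintro r ⟨j, hj, -⟩ rfl
    simp at hj
  -- in both half cubes the flipped coordinate is not `i`
  have hl1 : ∀ r, r ≠ r0 → i ∈ r → L r0 r ≠ i := by
    intro r h1 h2 h3
    have := (hL r0 r h1).1
    rw [h3, Finset.mem_symmDiff] at this
    tauto
  have hl2 : ∀ r, r ≠ ∅ → i ∉ r → L ∅ r ≠ i := by
    intro r h1 h2 h3
    have := (hL ∅ r h1).1
    rw [h3, Finset.mem_symmDiff] at this
    simp at this
    tauto
  have hmem : ∀ (r : Finset (Fin K)) l, l ≠ i → (i ∈ symmDiff r {l} ↔ i ∈ r) := by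
    intro r l hl
    simp only [Finset.mem_symmDiff, Finset.mem_singleton]
    have := hl.symm
    tauto
  let τ : Finset (Fin K) → ℕ := fun r =>
    if r = r0 then 1 else if i ∈ r then (pos (L r0 r)).val + 1 else (pos (L ∅ r)).val + 1
  let par : Finset (Fin K) → Option (Finset (Fin K)) := fun r =>
    if r = r0 then none else if i ∈ r then some (symmDiff r {L r0 r}) else
      if symmDiff r {L ∅ r} = ∅ then none else some (symmDiff r {L ∅ r})
  refine ⟨τ, par, ?_, ?_⟩
  · intro r hr
    by_cases h0 : r = r0
    · have e1 : τ r = 1 := by simp [τ, h0]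
      have e2 : par r = none := by simp [par, h0]
      rw [e1, e2]
      exact ⟨le_rfl, hK, fun _ => Or.inl h0, by simp⟩
    by_cases hir : i ∈ r
    · have e1 : τ r = (pos (L r0 r)).val + 1 := by simp [τ, h0, hir]
      have e2 : par r = some (symmDiff r {L r0 r}) := by simp [par, h0, hir]
      obtain ⟨h1, h2, h3⟩ := hL r0 r h0
      have hlt := (pos (L r0 r)).2
      have hgt := hpos0 _ (hl1 r h0 hir)
      rw [e1, e2]
      refine ⟨by omega, by omega, by simp, ?_⟩
      intro r' h
      simp only [Option.some.injEq] at h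
      have hir' : i ∈ r' := by rw [← h, hmem _ _ (hl1 r h0 hir)]; exact hir
      refine ⟨⟨i, hir', hiq⟩, ?_, _, h.symm⟩
      by_cases hr0' : r' = r0
      · have : τ r' = 1 := by simp [τ, hr0']
        omega
      · have e3 : τ r' = (pos (L r0 r')).val + 1 := by simp [τ, hr0', hir']
        rw [h] at h3
        have := h3 hr0'
        omega
    · have e1 : τ r = (pos (L ∅ r)).val + 1 := by simp [τ, h0, hir]
      obtain ⟨h1, h2, h3⟩ := hL ∅ r (hne r hr)
      have hlt := (pos (L ∅ r)).2
      have hgt := hpos0 _ (hl2 r (hne r hr) hir)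
      obtain ⟨h4, h5⟩ := flip_empty pos hpos r hr _ h1 h2
      by_cases hc : symmDiff r {L ∅ r} = ∅
      · have e2 : par r = none := by simp only [par, h0, hir, hc, if_true, if_false]
        rw [e1, e2]
        refine ⟨by omega, by omega, ?_, by simp⟩
        intro _
        exact Or.inr ⟨_, (h4 hc).1, hl2 r (hne r hr) hir, (h4 hc).2⟩
      · have e2 : par r = some (symmDiff r {L ∅ r}) := by
          simp only [par, h0, hir, hc, if_false]
        rw [e1, e2]
        refine ⟨by omega, by omega, by simp, ?_⟩
        intro r' h
        simp only [Option.some.injEq] at h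
        have hir' : i ∉ r' := by rw [← h, hmem _ _ (hl2 r (hne r hr) hir)]; exact hir
        have hr0' : r' ≠ r0 := by rintro rfl; exact hir' hi
        have e3 : τ r' = (pos (L ∅ r')).val + 1 := by simp [τ, hr0', hir']
        have := h3 hc
        rw [h] at this
        refine ⟨?_, by omega, _, h.symm⟩
        rw [← h]; exact h5 hc
  · -- times of roots other than `r0` exceed one
    have ht1 : ∀ r, (∃ j ∈ r, j.val < q) → r ≠ r0 → 1 < τ r := by
      intro r hr h0
      by_cases hir : i ∈ r
      · have e1 : τ r = (pos (L r0 r)).val + 1 := by simp [τ, h0, hir]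
        have hgt := hpos0 _ (hl1 r h0 hir)
        omega
      · have e1 : τ r = (pos (L ∅ r)).val + 1 := by simp [τ, h0, hir]
        have hgt := hpos0 _ (hl2 r (hne r hr) hir)
        omega
    have ht0 : τ r0 = 1 := by simp [τ]
    intro r r' hr hr' hp ht
    by_cases h0 : r = r0
    · by_contra hcon
      have := ht1 r' hr' (by rintro rfl; exact hcon h0)
      rw [h0] at ht
      omega
    by_cases h0' : r' = r0
    · have := ht1 r hr h0
      rw [h0'] at ht
      omega
    by_cases hir : i ∈ r <;> by_cases hir' : i ∈ r'
    · simp only [τ, par, h0, h0', hir, hir', if_true, if_false, Option.some.injEq] at ht hp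
      have hl : L r0 r = L r0 r' := pos.injective (Fin.ext (by simpa using ht))
      rw [hl] at hp
      exact symmDiff_single_cancel hp
    · exfalso
      simp only [par, h0, h0', hir, hir', if_true, if_false] at hp
      by_cases hc' : symmDiff r' {L ∅ r'} = ∅
      · simp [hc'] at hp
      · simp only [hc', if_false, Option.some.injEq] at hp
        have := (hmem r _ (hl1 r h0 hir)).2 hir
        rw [hp, hmem _ _ (hl2 r' (hne r' hr') hir')] at this
        exact hir' this
    · exfalso
      simp only [par, h0, h0', hir, hir', if_true, if_false] at hp
      by_cases hc' : symmDiff r {L ∅ r} = ∅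
      · simp [hc'] at hp
      · simp only [hc', if_false, Option.some.injEq] at hp
        have := (hmem r' _ (hl1 r' h0' hir')).2 hir'
        rw [← hp, hmem _ _ (hl2 r (hne r hr) hir)] at this
        exact hir this
    · simp only [τ, par, h0, h0', hir, hir', if_false] at ht hp
      have hl : L ∅ r = L ∅ r' := pos.injective (Fin.ext (by simpa using ht))
      rw [hl] at hp
      by_cases hc : symmDiff r {L ∅ r'} = ∅ <;> by_cases hc' : symmDiff r' {L ∅ r'} = ∅
      · exact symmDiff_single_cancel (hc.trans hc'.symm)
      · simp [hc, hc'] at hp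
      · simp [hc, hc'] at hp
      · simp only [hc, hc', if_false, Option.some.injEq] at hp
        exact symmDiff_single_cancel hp

/-- Combine a root scheme with binomial broadcasting in the trees. -/
lemma labelling_of_rootScheme {K s q : ℕ}
    (W : Finset (Finset (Fin K) × Finset (Fin s)))
    (E : Finset (Sym2 (Finset (Fin K) × Finset (Fin s))))
    (L : Finset (Fin s) → Fin s)
    (hL : ∀ D, D.Nonempty → L D ∈ D ∧ ∀ j ∈ D, j.val ≤ (L D).val)
    (hW : ∀ v ∈ W, v.2 ≠ ∅ → (v.1, v.2.erase (L v.2)) ∈ W)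
    (hWR : ∀ v ∈ W, ∃ j ∈ v.1, j.val < q)
    (hRW : ∀ r : Finset (Fin K), (∃ j ∈ r, j.val < q) → (r, ∅) ∈ W)
    (hE1 : ∀ r r' : Finset (Fin K), (∃ j ∈ r, j.val < q) → (∃ j ∈ r', j.val < q) →
      (∃ j, r' = symmDiff r {j}) → s((r', ∅), (r, ∅)) ∈ E)
    (hE2 : ∀ v ∈ W, v.2 ≠ ∅ → s((v.1, v.2.erase (L v.2)), v) ∈ E)
    (u : Finset (Fin K) × Finset (Fin s)) (hu : u ∈ W)
    (τR : Finset (Fin K) → ℕ) (parR : Finset (Fin K) → Option (Finset (Fin K)))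
    (hS : RootScheme (fun r => (∃ j ∈ r, j.val < q) ∧ (r, ∅) ≠ u)
      (fun r => s(u, (r, ∅)) ∈ E) τR parR) :
    ∃ (τ : Finset (Fin K) × Finset (Fin s) → ℕ)
      (par : Finset (Fin K) × Finset (Fin s) → Finset (Fin K) × Finset (Fin s)), τ u = 0 ∧
      (∀ v ∈ W, v ≠ u → par v ∈ W ∧ s(par v, v) ∈ E ∧ τ v ≤ K + s ∧ τ (par v) < τ v) ∧
      (∀ v ∈ W, ∀ w ∈ W, v ≠ u → w ≠ u → par v = par w → τ v = τ w → v = w) := by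
  obtain ⟨hS1, hS2⟩ := hS
  let τ : Finset (Fin K) × Finset (Fin s) → ℕ := fun v =>
    if v = u then 0 else if v.2 = ∅ then τR v.1 else K + 1 + (L v.2).val
  let par : Finset (Fin K) × Finset (Fin s) → Finset (Fin K) × Finset (Fin s) := fun v =>
    if v.2 = ∅ then (parR v.1).elim u (fun r' => (r', ∅)) else (v.1, v.2.erase (L v.2))
  have hτu : τ u = 0 := by simp [τ]
  have hτR : ∀ r, (r, ∅) ≠ u → τ (r, ∅) = τR r := by
    intro r h; simp [τ, h]
  have hτT : ∀ v, v ≠ u → v.2 ≠ ∅ → τ v = K + 1 + (L v.2).val := by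
    intro v h h2; simp [τ, h, h2]
  have hpR : ∀ r, par (r, ∅) = (parR r).elim u (fun r' => (r', ∅)) := by
    intro r; simp [par]
  have hpT : ∀ v, v.2 ≠ ∅ → par v = (v.1, v.2.erase (L v.2)) := by
    intro v h; simp [par, h]
  have hτle : ∀ v ∈ W, v ≠ u → v.2 = ∅ → τ v ≤ K := by
    rintro ⟨r, y⟩ hv hvu rfl
    rw [hτR r hvu]
    exact (hS1 r ⟨hWR _ hv, hvu⟩).2.1
  refine ⟨τ, par, hτu, ?_, ?_⟩
  · intro v hv hvu
    by_cases hy : v.2 = ∅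
    · obtain ⟨r, y⟩ := v
      simp only at hy
      subst hy
      obtain ⟨h1, h2, h3, h4⟩ := hS1 r ⟨hWR _ hv, hvu⟩
      rw [hpR, hτR r hvu]
      cases hpr : parR r with
      | none =>
        simp only [Option.elim]
        exact ⟨hu, h3 hpr, by omega, by omega⟩
      | some r' =>
        obtain ⟨⟨h5, h6⟩, h7, h8⟩ := h4 r' hpr
        simp only [Option.elim]
        refine ⟨hRW _ h5, hE1 _ _ (hWR _ hv) h5 h8, by omega, ?_⟩
        rw [hτR r' h6]; exact h7
    · rw [hpT v hy, hτT v hvu hy]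
      have hlt := (L v.2).2
      refine ⟨hW v hv hy, hE2 v hv hy, by omega, ?_⟩
      by_cases hpu : (v.1, v.2.erase (L v.2)) = u
      · rw [hpu, hτu]; omega
      · by_cases he : v.2.erase (L v.2) = ∅
        · have := hτle _ (hW v hv hy) hpu he
          omega
        · rw [hτT _ hpu he]
          have h1 := (hL _ (Finset.nonempty_iff_ne_empty.2 he)).1
          have h2 := hL _ (Finset.nonempty_iff_ne_empty.2 hy)
          rw [Finset.mem_erase] at h1
          have h3 := h2.2 _ h1.2
          have h4 : (L (v.2.erase (L v.2))).val ≠ (L v.2).val := fun h => h1.1 (Fin.ext h)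
          simp only
          omega
  · intro v hv w hw hvu hwu hp ht
    by_cases hy : v.2 = ∅ <;> by_cases hy' : w.2 = ∅
    · obtain ⟨r, y⟩ := v
      obtain ⟨r', y'⟩ := w
      simp only at hy hy'
      subst hy
      subst hy'
      rw [hpR, hpR] at hp
      rw [hτR r hvu, hτR r' hwu] at ht
      have : r = r' := by
        apply hS2 r r' ⟨hWR _ hv, hvu⟩ ⟨hWR _ hw, hwu⟩ _ ht
        have q1 := (hS1 r ⟨hWR _ hv, hvu⟩).2.2.2
        have q2 := (hS1 r' ⟨hWR _ hw, hwu⟩).2.2.2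
        cases hpr : parR r with
        | none =>
          cases hpr' : parR r' with
          | none => rfl
          | some c =>
            rw [hpr, hpr'] at hp
            exact absurd hp.symm (q2 c hpr').1.2
        | some a =>
          cases hpr' : parR r' with
          | none =>
            rw [hpr, hpr'] at hp
            exact absurd hp (q1 a hpr).1.2
          | some c =>
            rw [hpr, hpr'] at hp
            simp only [Option.elim, Prod.mk.injEq, and_true] at hp
            rw [hp]
      rw [this]
    · have h1 := hτle v hv hvu hy
      rw [hτT w hwu hy'] at ht
      omega
    · have h1 := hτle w hw hwu hy'
      rw [hτT v hvu hy] at ht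
      omega
    · rw [hτT v hvu hy, hτT w hwu hy'] at ht
      rw [hpT v hy, hpT w hy'] at hp
      have hl : L v.2 = L w.2 := Fin.ext (by omega)
      simp only [Prod.mk.injEq] at hp
      have h1 := (hL _ (Finset.nonempty_iff_ne_empty.2 hy)).1
      have h2 := (hL _ (Finset.nonempty_iff_ne_empty.2 hy')).1
      refine Prod.ext hp.1 ?_
      rw [← Finset.insert_erase h1, ← Finset.insert_erase h2, hp.2, hl]

/-- The number of roots. -/
lemma card_roots {K q : ℕ} (hq : q ≤ K) :
    (Finset.univ.filter (fun r : Finset (Fin K) => ∃ j ∈ r, j.val < q)).card + 2 ^ (K - q)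
      = 2 ^ K := by
  classical
  have h1 := Finset.card_filter_add_card_filter_not (s := (Finset.univ : Finset (Finset (Fin K))))
    (fun r : Finset (Fin K) => ∃ j ∈ r, j.val < q)
  have h2 : (Finset.univ.filter (fun r : Finset (Fin K) => ¬ ∃ j ∈ r, j.val < q)) =
      (Finset.univ.filter (fun j : Fin K => ¬ j.val < q)).powerset := by
    ext r
    simp only [Finset.mem_filter, Finset.mem_univ, true_and, Finset.mem_powerset, not_exists,
      not_and, Finset.subset_iff]
  have h3 := Finset.card_filter_add_card_filter_not (s := (Finset.univ : Finset (Fin K)))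
    (fun j : Fin K => j.val < q)
  rw [Fin.card_filter_val_lt, Finset.card_univ, Fintype.card_fin] at h3
  rw [h2, Finset.card_powerset, Finset.card_univ, Fintype.card_finset, Fintype.card_fin] at h1
  rw [← h1]
  congr 2
  omega

/-- The main construction. -/
lemma broadcastFunction_le_construction (K s q n : ℕ) (hs : 0 < s) (hq : q ≤ K) (hq1 : 1 ≤ q)
    (M : ℕ) (hM : M + 2 ^ (K - q) = 2 ^ K) (h1 : M * (s + 1) ≤ n) (h2 : n ≤ M * 2 ^ s)
    (hlog : K + s ≤ Nat.clog 2 n) :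
    2 * (broadcastFunction n + M * s) + 2 * (q + 1) * M ≤ 2 * (q + 1) * n + K * M := by
  classical
  have hKpos : 0 < K := by omega
  have hFs : Nonempty (Fin s) := ⟨⟨0, hs⟩⟩
  have hFK : Nonempty (Fin K) := ⟨⟨0, hKpos⟩⟩
  obtain ⟨L, hL⟩ := exists_argmax (fun j : Fin s => j.val)
  set R : Finset (Finset (Fin K)) :=
    Finset.univ.filter (fun r : Finset (Fin K) => ∃ j ∈ r, j.val < q) with hRdef
  have hRmem : ∀ r, r ∈ R ↔ ∃ j ∈ r, j.val < q := by simp [hRdef]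
  have hRcard : R.card = M := by
    have := card_roots hq
    rw [← hRdef] at this
    omega
  -- a distinguished top coordinate of each root
  have hI : ∀ r : Finset (Fin K), ∃ i : Fin K, r ∈ R → i ∈ r ∧ i.val < q := by
    intro r
    by_cases hr : r ∈ R
    · obtain ⟨j, hj⟩ := (hRmem r).1 hr
      exact ⟨j, fun _ => hj⟩
    · exact ⟨Classical.arbitrary _, fun h => absurd h hr⟩
  choose I hI using hI
  -- the vertex set
  let S1 : Finset (Finset (Fin s)) := Finset.univ.filter (fun y => y.card ≤ 1)
  let C1 : Finset (Finset (Fin s)) := Finset.powersetCard 1 Finset.univ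
  have hC1 : C1.card = s := by simp [C1]
  have hS1 : S1 = insert ∅ C1 := by
    ext y
    simp only [S1, C1, Finset.mem_filter, Finset.mem_univ, true_and, Finset.mem_insert,
      Finset.mem_powersetCard_univ]
    rw [← Finset.card_eq_zero]
    omega
  have hS1c : S1.card = s + 1 := by
    rw [hS1, Finset.card_insert_of_notMem, hC1]
    simp [C1]
  have hemp : ∀ y : Finset (Fin s), y ∉ S1 → y ≠ ∅ := by
    rintro y hy rfl
    simp [S1] at hy
  obtain ⟨W, hBW, hWF, hWn, hWd⟩ := exists_downclosed (R ×ˢ (Finset.univ : Finset (Finset (Fin s))))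
    (R ×ˢ S1) (fun v => (v.1, v.2.erase (L v.2))) (fun v => v.2.card)
    (Finset.product_subset_product_right (Finset.subset_univ _))
    (by
      rintro ⟨r, y⟩ hv hvB
      simp only [Finset.mem_product, Finset.mem_univ, and_true] at hv hvB ⊢
      refine ⟨hv, Finset.card_erase_lt_of_mem (hL y ?_).1⟩
      exact Finset.nonempty_iff_ne_empty.2 (hemp y (fun h => hvB ⟨hv, h⟩)))
    n (by rw [Finset.card_product, hRcard, hS1c]; exact h1)
    (by rw [Finset.card_product, hRcard, Finset.card_univ, Fintype.card_finset, Fintype.card_fin]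
        exact h2)
  have hWR : ∀ v ∈ W, v.1 ∈ R := fun v hv => (Finset.mem_product.1 (hWF hv)).1
  have hRW : ∀ r, r ∈ R → (r, (∅ : Finset (Fin s))) ∈ W := by
    intro r hr
    apply hBW
    simp [S1, hr]
  have hW : ∀ v ∈ W, v.2 ≠ ∅ → (v.1, v.2.erase (L v.2)) ∈ W := by
    intro v hv hy
    by_cases hvB : v ∈ R ×ˢ S1
    · have h3 : v.2.card ≤ 1 := by simpa [S1] using (Finset.mem_product.1 hvB).2
      have h4 : v.2.erase (L v.2) = ∅ := by
        rw [← Finset.card_eq_zero, Finset.card_erase_of_mem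
          (hL _ (Finset.nonempty_iff_ne_empty.2 hy)).1]
        omega
      rw [h4]
      exact hRW _ (hWR v hv)
    · exact hWd v hv hvB
  -- the edges
  let top : Finset (Fin K) := Finset.univ.filter (fun j => j.val < q)
  have htop : top.card = q := by
    simp only [top]
    rw [Fin.card_filter_val_lt]; omega
  let T : Finset (Fin K) × Finset (Fin s) → Finset (Fin K) := fun v =>
    if v.2.card = 1 then top.erase (I v.1) else top
  let U : Finset (Finset (Fin K) × Finset (Fin s)) := W.filter (fun v => v.2 ≠ ∅)
  let Ej : Fin K → Finset (Finset (Fin K)) := fun j =>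
    R.filter (fun r => j ∈ r ∧ symmDiff r {j} ∈ R)
  let E1 : Finset (Sym2 (Finset (Fin K) × Finset (Fin s))) :=
    Finset.univ.biUnion (fun j : Fin K => (Ej j).image (fun r => s((symmDiff r {j}, ∅), (r, ∅))))
  let E2 : Finset (Sym2 (Finset (Fin K) × Finset (Fin s))) :=
    U.biUnion (fun v => insert s((v.1, v.2.erase (L v.2)), v)
      ((T v).image (fun j => s(v, ({j}, ∅)))))
  have hE2T : ∀ v ∈ W, v.2 ≠ ∅ → ∀ j ∈ T v, s(v, ({j}, ∅)) ∈ E1 ∪ E2 := by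
    intro v hv hy j hj
    apply Finset.mem_union_right
    refine Finset.mem_biUnion.2 ⟨v, Finset.mem_filter.2 ⟨hv, hy⟩, ?_⟩
    exact Finset.mem_insert_of_mem (Finset.mem_image_of_mem _ hj)
  have hE2P : ∀ v ∈ W, v.2 ≠ ∅ → s((v.1, v.2.erase (L v.2)), v) ∈ E1 ∪ E2 := by
    intro v hv hy
    apply Finset.mem_union_right
    refine Finset.mem_biUnion.2 ⟨v, Finset.mem_filter.2 ⟨hv, hy⟩, ?_⟩
    exact Finset.mem_insert_self _ _
  have hE1 : ∀ r r' : Finset (Fin K), (∃ j ∈ r, j.val < q) → (∃ j ∈ r', j.val < q) →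
      (∃ j, r' = symmDiff r {j}) → s((r', ∅), (r, ∅)) ∈ E1 ∪ E2 := by
    rintro r r' hr hr' ⟨j, hj⟩
    rw [← hRmem] at hr hr'
    apply Finset.mem_union_left
    refine Finset.mem_biUnion.2 ⟨j, Finset.mem_univ _, Finset.mem_image.2 ?_⟩
    have hj' : r = symmDiff r' {j} := by rw [hj, symmDiff_symmDiff_cancel_right]
    by_cases hjr : j ∈ r
    · refine ⟨r, Finset.mem_filter.2 ⟨hr, hjr, hj ▸ hr'⟩, by rw [hj]⟩
    · refine ⟨r', Finset.mem_filter.2 ⟨hr', ?_, hj' ▸ hr⟩, ?_⟩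
      · rw [hj]; simp [Finset.mem_symmDiff, hjr]
      · rw [← hj', Sym2.eq_swap]
  -- the broadcast labelling
  have hmain : broadcastFunction n ≤ (E1 ∪ E2).card := by
    rw [← hWn] at hlog ⊢
    refine broadcastFunction_le_of_labelling W (E1 ∪ E2) (K + s) ?_ hlog ?_
    · refine ⟨_, hRW {⟨0, hKpos⟩} ?_⟩
      rw [hRmem]
      exact ⟨⟨0, hKpos⟩, by simp, hq1⟩
    · intro u hu
      have hscheme : ∃ τR parR, RootScheme (fun r => (∃ j ∈ r, j.val < q) ∧ (r, ∅) ≠ u)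
          (fun r => s(u, (r, ∅)) ∈ E1 ∪ E2) τR parR := by
        have hu1 := hWR u hu
        obtain ⟨hi1, hi2⟩ := hI u.1 hu1
        by_cases hy : u.2 = ∅
        · obtain ⟨r0, y⟩ := u
          simp only at hy
          subst hy
          obtain ⟨τ, par, ha, hb⟩ := rootScheme_root r0 (I r0) hi1 hi2
          have hR : ∀ r, ((∃ j ∈ r, j.val < q) ∧ (r, (∅ : Finset (Fin s))) ≠ (r0, ∅)) ↔
              ((∃ j ∈ r, j.val < q) ∧ r ≠ r0) := by
            intro r; simp
          refine ⟨τ, par, ?_, ?_⟩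
          · intro r hr
            rw [hR] at hr
            obtain ⟨c1, c2, c3, c4⟩ := ha r hr
            refine ⟨c1, c2, ?_, ?_⟩
            · intro h
              exact hE1 _ _ hr.1 ((hRmem _).1 hu1) (c3 h)
            · intro r' h
              exact ⟨(hR r').2 (c4 r' h).1, (c4 r' h).2⟩
          · intro r r' hr hr'
            rw [hR] at hr hr'
            exact hb r r' hr hr'
        · have hR : ∀ r, ((∃ j ∈ r, j.val < q) ∧ (r, (∅ : Finset (Fin s))) ≠ u) ↔
              (∃ j ∈ r, j.val < q) := by
            intro r
            constructor
            · exact fun h => h.1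
            · intro h
              refine ⟨h, ?_⟩
              rintro rfl
              exact hy rfl
          by_cases hc : u.2.card = 1
          · obtain ⟨τ, par, ha, hb⟩ := rootScheme_child u.1 (I u.1) hi1 hi2
            refine ⟨τ, par, ?_, ?_⟩
            · intro r hr
              rw [hR] at hr
              obtain ⟨c1, c2, c3, c4⟩ := ha r hr
              refine ⟨c1, c2, ?_, ?_⟩
              · intro h
                rcases c3 h with h | ⟨j, hj1, hj2, hj3⟩
                · have := hE2P u hu hy
                  have h4 : u.2.erase (L u.2) = ∅ := by
                    rw [← Finset.card_eq_zero, Finset.card_erase_of_mem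
                      (hL _ (Finset.nonempty_iff_ne_empty.2 hy)).1]
                    omega
                  rw [h4, Sym2.eq_swap, ← h] at this
                  exact this
                · rw [hj3]
                  apply hE2T u hu hy
                  simp [T, hc, top, hj1, hj2]
              · intro r' h
                exact ⟨(hR r').2 (c4 r' h).1, (c4 r' h).2⟩
            · intro r r' hr hr'
              rw [hR] at hr hr'
              exact hb r r' hr hr'
          · obtain ⟨τ, par, ha, hb⟩ := rootScheme_ext (q := q) hKpos
            refine ⟨τ, par, ?_, ?_⟩
            · intro r hr
              rw [hR] at hr
              obtain ⟨c1, c2, c3, c4⟩ := ha r hr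
              refine ⟨c1, c2, ?_, ?_⟩
              · intro h
                obtain ⟨j, hj1, hj3⟩ := c3 h
                rw [hj3]
                apply hE2T u hu hy
                simp [T, hc, top, hj1]
              · intro r' h
                exact ⟨(hR r').2 (c4 r' h).1, (c4 r' h).2⟩
            · intro r r' hr hr'
              rw [hR] at hr hr'
              exact hb r r' hr hr'
      obtain ⟨τR, parR, hS⟩ := hscheme
      exact labelling_of_rootScheme (q := q) W (E1 ∪ E2) L hL hW
        (fun v hv => (hRmem _).1 (hWR v hv)) (fun r hr => hRW r ((hRmem r).2 hr)) hE1 hE2P u hu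
        τR parR hS
  -- counting the edges between roots
  have hEj : ∀ j, 2 * (Ej j).card ≤ M := by
    intro j
    have hinj : Set.InjOn (fun r : Finset (Fin K) => symmDiff r {j}) (Ej j) :=
      fun a _ b _ h => symmDiff_single_cancel h
    have hdis : Disjoint (Ej j) ((Ej j).image (fun r => symmDiff r {j})) := by
      rw [Finset.disjoint_left]
      intro r hr hr'
      obtain ⟨r2, h3, h4⟩ := Finset.mem_image.1 hr'
      have h5 := (Finset.mem_filter.1 hr).2.1
      have h6 := (Finset.mem_filter.1 h3).2.1
      rw [← h4] at h5
      simp [Finset.mem_symmDiff, h6] at h5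
    have hsub : (Ej j) ∪ ((Ej j).image (fun r => symmDiff r {j})) ⊆ R := by
      apply Finset.union_subset (Finset.filter_subset _ _)
      intro r hr
      obtain ⟨r2, h3, h4⟩ := Finset.mem_image.1 hr
      rw [← h4]
      exact (Finset.mem_filter.1 h3).2.2
    have := Finset.card_le_card hsub
    rw [Finset.card_union_of_disjoint hdis, Finset.card_image_of_injOn hinj, hRcard] at this
    omega
  have hc1 : 2 * E1.card ≤ K * M := by
    have h3 : E1.card ≤ ∑ j : Fin K, (Ej j).card :=
      Finset.card_biUnion_le.trans (Finset.sum_le_sum fun j _ => Finset.card_image_le)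
    have h4 : ∑ j : Fin K, 2 * (Ej j).card ≤ ∑ j : Fin K, M := Finset.sum_le_sum fun j _ => hEj j
    rw [← Finset.mul_sum] at h4
    simp only [Finset.sum_const, Finset.card_univ, Fintype.card_fin, smul_eq_mul] at h4
    omega
  -- counting the other edges
  have hU : U.card + M = n := by
    have h3 := Finset.card_filter_add_card_filter_not (s := W) (fun v => v.2 ≠ ∅)
    have h4 : W.filter (fun v => ¬ v.2 ≠ ∅) = R ×ˢ {∅} := by
      ext ⟨r, y⟩
      simp only [Finset.mem_filter, ne_eq, not_not, Finset.mem_product, Finset.mem_singleton]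
      constructor
      · rintro ⟨a, b⟩; exact ⟨hWR _ a, b⟩
      · rintro ⟨a, rfl⟩; exact ⟨hRW _ a, rfl⟩
    rw [h4, Finset.card_product, hRcard, hWn] at h3
    simpa [U] using h3
  have hchild : (U.filter (fun v => v.2.card = 1)).card = M * s := by
    have : U.filter (fun v => v.2.card = 1) = R ×ˢ C1 := by
      ext ⟨r, y⟩
      simp only [U, C1, Finset.mem_filter, Finset.mem_product, Finset.mem_powersetCard_univ]
      constructor
      · rintro ⟨⟨a, b⟩, c⟩; exact ⟨hWR _ a, c⟩
      · rintro ⟨a, c⟩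
        refine ⟨⟨hBW ?_, ?_⟩, c⟩
        · simp [S1, a, c]
        · rintro rfl
          simp at c
    rw [this, Finset.card_product, hRcard, hC1]
  have hc2 : E2.card + M * s ≤ (q + 1) * U.card := by
    have h3 : E2.card ≤ ∑ v ∈ U, ((T v).card + 1) := by
      refine Finset.card_biUnion_le.trans (Finset.sum_le_sum fun v _ => ?_)
      refine (Finset.card_insert_le _ _).trans ?_
      exact Nat.succ_le_succ Finset.card_image_le
    have h4 : M * s = ∑ v ∈ U, if v.2.card = 1 then 1 else 0 := by
      rw [← hchild, Finset.card_filter]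
    have h5 : ∑ v ∈ U, (((T v).card + 1) + if v.2.card = 1 then 1 else 0) = ∑ v ∈ U, (q + 1) := by
      apply Finset.sum_congr rfl
      intro v hv
      have hv1 := hI _ (hWR v (Finset.mem_filter.1 hv).1)
      by_cases hc : v.2.card = 1
      · have : (T v).card = q - 1 := by
          simp only [T, hc, if_true]
          rw [Finset.card_erase_of_mem (by simp [top, hv1.2]), htop]
        rw [this, if_pos hc]
        omega
      · have : (T v).card = q := by
          simp only [T, hc, if_false]
          exact htop
        rw [this, if_neg hc]
    rw [Finset.sum_add_distrib, ← h4, Finset.sum_const, smul_eq_mul] at h5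
    nlinarith
  have h3 := Finset.card_union_le E1 E2
  subst hU
  nlinarith

lemma final_arith (b n t p q s e A B C : ℤ) (hAC : A = 2 * C) (hAB : A = B + e)
    (h4 : B * 4 ≤ A) (hB : 1 ≤ B) (hts : t = s + (p + q) + 2) (htk : 2 * (p + q) + 2 ≤ t)
    (hq : 2 ≤ q) (hp : 0 ≤ p)
    (key : 2 * (b + 8 * e * s) + 2 * (q + 1) * (8 * e) ≤ 2 * (q + 1) * n + (p + q + 3) * (8 * e)) :
    b ≤ (p + q + 1 - p) * n - (2 * t - (p + q) + 2 * p + 4) * C + t - (p + q) - (p - 2) * B := by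
  have hs : s = t - (p + q) - 2 := by linarith
  subst hs
  have f1 : (0 : ℤ) ≤ 2 * t - (p + q) - 2 * p - 5 := by linarith
  have f2 : 6 * A * (2 * t - (p + q) - 2 * p - 5) ≤ 8 * e * (2 * t - (p + q) - 2 * p - 5) :=
    mul_le_mul_of_nonneg_right (by linarith) f1
  have f3 : p * (B * 4) ≤ p * A := mul_le_mul_of_nonneg_left h4 hp
  have f4 : 0 ≤ A * (20 * t - 10 * (p + q) - 29 * p - 68) :=
    mul_nonneg (by linarith) (by linarith)
  have f5 : (2 * t - (p + q) + 2 * p + 4) * A = 2 * ((2 * t - (p + q) + 2 * p + 4) * C) := by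
    rw [hAC]; ring
  have f6 : 2 * b ≤ 2 * (q + 1) * n - 8 * e * (2 * t - (p + q) - 2 * p - 5) := by linarith
  linarith

/-- For `t ≥ 7`, `2 ≤ k ≤ ⌊t/2⌋ - 1`, `N = (2^k - 1)·2^(t+1-k)` and `2^t < n < N`, with
`d = N - n`, `x = ⌊d / 2^(t+1-k)⌋` and `p = ⌊log₂ (x+1)⌋` if `x > 0` (and `p = 0` if `x = 0`),
the broadcast function satisfies
`B(n) ≤ (k+1-p)·n - (2t - k + 2p + 4)·2^(k-1) + t - k - (p-2)·2^p`. -/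
theorem broadcastFunction_le_of_n (t k n N d x p : ℕ) (ht : 7 ≤ t) (hk : 2 ≤ k)
    (hk' : k ≤ t / 2 - 1) (hN : N = (2 ^ k - 1) * 2 ^ (t + 1 - k))
    (hn1 : 2 ^ t < n) (hn2 : n < N)
    (hd : d = N - n) (hx : x = d / 2 ^ (t + 1 - k))
    (hp : p = if 0 < x then Nat.log 2 (x + 1) else 0) :
    (broadcastFunction n : ℤ) ≤
      (k + 1 - p) * n - (2 * t - k + 2 * p + 4) * 2 ^ (k - 1) + t - k - (p - 2) * 2 ^ p := by
  have htk : 2 * k + 2 ≤ t := by omega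
  have hp1 : 2 ^ p ≤ x + 1 := by
    by_cases h : 0 < x
    · rw [if_pos h] at hp
      rw [hp]
      exact Nat.pow_log_le_self 2 (by omega)
    · rw [if_neg h] at hp
      rw [hp]; simp
  have hSpos : 0 < 2 ^ (t + 1 - k) := by positivity
  have hxd : x * 2 ^ (t + 1 - k) ≤ d := by rw [hx]; exact Nat.div_mul_le_self _ _
  -- `N = 2 ^ (t + 1) - 2 ^ (t + 1 - k)`
  have hkS : 2 ^ k * 2 ^ (t + 1 - k) = 2 ^ (t + 1) := by rw [← pow_add]; congr 1; omega
  have hN' : N + 2 ^ (t + 1 - k) = 2 ^ (t + 1) := by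
    have h1 : 1 ≤ 2 ^ k := Nat.one_le_two_pow
    have h2 : 2 ^ k = (2 ^ k - 1) + 1 := by omega
    rw [← hkS, hN, h2, Nat.add_sub_cancel]
    ring
  have hnd : n + d = N := by omega
  -- `n ≤ 2 ^ (t + 1) - 2 ^ p * 2 ^ (t + 1 - k)`
  have hnp : n + 2 ^ p * 2 ^ (t + 1 - k) ≤ 2 ^ (t + 1) := by nlinarith
  have hpk : p + 2 ≤ k := by
    by_contra hcon
    have h1 : 2 ^ (k - 1) * 2 ^ (t + 1 - k) ≤ 2 ^ p * 2 ^ (t + 1 - k) :=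
      Nat.mul_le_mul_right _ (Nat.pow_le_pow_right (by norm_num) (by omega))
    have h2 : 2 ^ (k - 1) * 2 ^ (t + 1 - k) = 2 ^ t := by rw [← pow_add]; congr 1; omega
    have h3 : 2 ^ (t + 1) = 2 * 2 ^ t := by ring
    omega
  obtain ⟨q, rfl⟩ : ∃ q, k = p + q := ⟨k - p, by omega⟩
  obtain ⟨s, hs⟩ : ∃ s, t = s + (p + q) + 2 := ⟨t - (p + q) - 2, by omega⟩
  have hs3 : 3 ≤ s := by omega
  have hclog : Nat.clog 2 n = t + 1 := by
    apply le_antisymm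
    · exact Nat.clog_le_of_le_pow (by omega)
    · exact (Nat.lt_clog_iff_pow_lt (by norm_num)).2 hn1
  have hpow : 2 ^ p * 4 ≤ 2 ^ (p + q) := by
    have : 2 ^ (p + 2) ≤ 2 ^ (p + q) := Nat.pow_le_pow_right (by norm_num) (by omega)
    calc 2 ^ p * 4 = 2 ^ (p + 2) := by ring
      _ ≤ _ := this
  obtain ⟨D, hD⟩ : ∃ D, 2 ^ (p + q) = 2 ^ p + D := ⟨2 ^ (p + q) - 2 ^ p, by omega⟩
  have key := broadcastFunction_le_construction (p + q + 3) s q n (by omega) (by omega) (by omega)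
    (8 * D) ?_ ?_ ?_ ?_
  · have hpk2 : (2 : ℤ) ^ (p + q) = 2 * 2 ^ (p + q - 1) := by
      rw [← pow_succ']; congr 1; omega
    have key' : (2 : ℤ) * (broadcastFunction n + 8 * D * s) + 2 * (q + 1) * (8 * D)
        ≤ 2 * (q + 1) * n + (p + q + 3) * (8 * D) := by exact_mod_cast key
    have hD' : (2 : ℤ) ^ (p + q) = 2 ^ p + D := by exact_mod_cast hD
    have hpow' : (2 : ℤ) ^ p * 4 ≤ 2 ^ (p + q) := by exact_mod_cast hpow
    have hB : (1 : ℤ) ≤ 2 ^ p := one_le_pow₀ (by norm_num)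
    have hts : (t : ℤ) = s + (p + q) + 2 := by exact_mod_cast hs
    have htk' : 2 * ((p : ℤ) + q) + 2 ≤ t := by exact_mod_cast htk
    have hq2 : (2 : ℤ) ≤ q := by
      have : 2 ≤ q := by omega
      exact_mod_cast this
    have hp0 : (0 : ℤ) ≤ p := by positivity
    push_cast
    exact final_arith _ _ _ _ _ _ _ _ _ _ hpk2 hD' hpow' hB hts htk' hq2 hp0 key'
  · have e1 : p + q + 3 - q = p + 3 := by omega
    rw [e1, pow_add 2 (p + q) 3, hD, pow_add 2 p 3]
    ring
  · have e1 : s + 1 ≤ 2 ^ (s - 1) := by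
      obtain ⟨c, rfl⟩ : ∃ c, s = c + 3 := ⟨s - 3, by omega⟩
      clear * -
      induction c with
      | zero => norm_num
      | succ c ih =>
        have : 2 ^ (c + 1 + 3 - 1) = 2 * 2 ^ (c + 3 - 1) := by
          rw [← pow_succ']; congr 1
        omega
    have e2 : 8 * D ≤ 2 ^ (p + q + 3) := by
      rw [pow_add 2 (p + q) 3, hD]
      omega
    calc 8 * D * (s + 1) ≤ 2 ^ (p + q + 3) * 2 ^ (s - 1) := Nat.mul_le_mul e2 e1
      _ = 2 ^ t := by rw [← pow_add]; congr 1; omega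
      _ ≤ n := hn1.le
  · have e1 : t + 1 - (p + q) = s + 3 := by omega
    rw [e1, hD] at hkS
    rw [e1, ← hkS, pow_add 2 s 3] at hnp
    nlinarith
  · omega
end

section
/- Let t, k, n be positive integers with t ≥ 7, n odd, and 2 ≤ k ≤ ⌈t/2⌉ − 1, and let N = (2^k − 1)·2^{t+1−k}. Suppose 2^t < n < N. Set d = N − n, x = ⌊d / 2^{t+1−k}⌋, and p = ⌊log₂(x+1)⌋ if x > 0 and p = 0 if x = 0. Then the broadcast function satisfies B(n) ≤ (k + 1 − p)·n − (2t − k + 2p + 4)·2^{k−1} + t − k − (p − 2)·2^p. -/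
namespace BroadcastOdd

/-! ### Abstract broadcast schemes -/

/-- A scheme: informing times `τ` and callers `c`, on the vertices in `A`. -/
def Scheme {W : Type*} (G : SimpleGraph W) (A : Finset W) (u : W) (b : ℕ) : Prop :=
  ∃ (τ : W → ℕ) (c : W → W), τ u = 0 ∧
    (∀ v ∈ A, v ≠ u → c v ∈ A ∧ G.Adj (c v) v ∧ τ (c v) < τ v ∧ τ v ≤ b) ∧
    (∀ v ∈ A, ∀ w ∈ A, v ≠ u → w ≠ u → c v = c w → τ v = τ w → v = w)

theorem Scheme.protocol {W : Type*} {G : SimpleGraph W} {A : Finset W} {n b : ℕ}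
    (e : Fin n → W) (he : Function.Injective e) (hA : ∀ v, v ∈ A ↔ ∃ x, e x = v)
    (x : Fin n) (h : Scheme G A (e x) b) :
    IsBroadcastProtocol (G.comap e) x b ∧ ∀ y, (G.comap e).Reachable x y := by
  obtain ⟨τ, c, h0, h1, h2⟩ := h
  have hmem : ∀ y, e y ∈ A := fun y => (hA _).2 ⟨y, rfl⟩
  have hc : ∀ y, ∃ z, y ≠ x → e z = c (e y) := by
    intro y
    by_cases hy : y = x
    · exact ⟨x, fun h => absurd hy h⟩
    · obtain ⟨z, hz⟩ := (hA _).1 (h1 (e y) (hmem y) (fun h => hy (he h))).1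
      exact ⟨z, fun _ => hz⟩
  choose c' hc' using hc
  have key : ∀ y, y ≠ x → (G.comap e).Adj (c' y) y ∧ τ (e (c' y)) < τ (e y) ∧ τ (e y) ≤ b := by
    intro y hy
    have := h1 (e y) (hmem y) (fun h => hy (he h))
    rw [SimpleGraph.comap_adj, hc' y hy]
    exact this.2
  constructor
  · refine ⟨fun i => {y | τ (e y) ≤ i}, ?_, ?_, ?_, ?_⟩
    · ext y
      simp only [Set.mem_ofPred_eq, Set.mem_singleton_iff]
      constructor
      · intro h
        by_contra hy
        have := (key y hy).2.1
        omega
      · rintro rfl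
        omega
    · intro i y hy
      simp only [Set.mem_ofPred_eq] at *
      omega
    · ext y
      simp only [Set.mem_ofPred_eq, Set.mem_univ, iff_true]
      by_cases hy : y = x
      · subst hy; omega
      · exact (key y hy).2.2
    · intro i
      have hne : ∀ v : ({y | τ (e y) ≤ i + 1} \ {y | τ (e y) ≤ i} : Set (Fin n)),
          v.1 ≠ x ∧ τ (e v.1) = i + 1 := by
        rintro ⟨v, hv1, hv2⟩
        have hv1' : τ (e v) ≤ i + 1 := hv1
        have hv2' : ¬ τ (e v) ≤ i := hv2
        refine ⟨?_, by simp only []; omega⟩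
        intro hvx
        have hvx' : v = x := hvx
        rw [hvx'] at hv2'
        omega
      refine ⟨fun v => ⟨c' v.1, ?_⟩, ?_, ?_⟩
      · have := (key v.1 (hne v).1).2.1
        have := (hne v).2
        simp only [Set.mem_ofPred_eq]
        omega
      · intro v w hvw
        have hvw' : c' v.1 = c' w.1 := congrArg Subtype.val hvw
        apply Subtype.ext
        apply he
        refine h2 _ (hmem _) _ (hmem _) (fun h => (hne v).1 (he h)) (fun h => (hne w).1 (he h)) ?_ ?_
        · rw [← hc' _ (hne v).1, ← hc' _ (hne w).1, hvw']
        · rw [(hne v).2, (hne w).2]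
      · intro v
        exact (key v.1 (hne v).1).1
  · have : ∀ k y, τ (e y) ≤ k → (G.comap e).Reachable x y := by
      intro k
      induction k with
      | zero =>
        intro y hy
        by_cases hyx : y = x
        · subst hyx; exact SimpleGraph.Reachable.refl _
        · have := (key y hyx).2.1
          omega
      | succ k ih =>
        intro y hy
        by_cases hyx : y = x
        · subst hyx; exact SimpleGraph.Reachable.refl _
        · have := key y hyx
          exact (ih (c' y) (by omega)).trans this.1.reachable
    exact fun y => this _ y le_rfl

theorem broadcastFunction_le {W : Type*} [DecidableEq W] (G : SimpleGraph W) (A : Finset W) (n b : ℕ)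
    (hn : A.card = n) (hn0 : 0 < n) (hb : b ≤ Nat.clog 2 n)
    (hs : ∀ u ∈ A, Scheme G A u b) (S : Finset (Sym2 W))
    (hS : ∀ v ∈ A, ∀ w ∈ A, G.Adj v w → s(v, w) ∈ S) :
    broadcastFunction n ≤ S.card := by
  let e0 := A.equivFinOfCardEq hn
  let e : Fin n → W := fun i => (e0.symm i).1
  have he : Function.Injective e := Subtype.val_injective.comp e0.symm.injective
  have hmem : ∀ i, e i ∈ A := fun i => (e0.symm i).2
  have hA : ∀ v, v ∈ A ↔ ∃ x, e x = v := by
    intro v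
    constructor
    · intro hv
      exact ⟨e0 ⟨v, hv⟩, by simp [e]⟩
    · rintro ⟨x, rfl⟩
      exact hmem x
  have hp := fun x => Scheme.protocol e he hA x (hs (e x) (hmem x))
  have h1 : broadcastFunction n ≤ (G.comap e).edgeSet.ncard := by
    unfold broadcastFunction
    refine Nat.sInf_le ⟨G.comap e, ?_, rfl, ?_⟩
    · have : Nonempty (Fin n) := ⟨⟨0, hn0⟩⟩
      exact SimpleGraph.Connected.mk (fun x y => (hp x).2 y)
    · intro u
      exact (Nat.sInf_le (hp u).1).trans hb
  refine h1.trans ?_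
  · rw [← Set.ncard_coe_finset S]
    apply Set.ncard_le_ncard_of_injOn (Sym2.map e)
    · intro a
      induction a using Sym2.ind with
      | _ x y =>
        intro h
        exact hS _ (hmem x) _ (hmem y) h
    · exact (Sym2.map.injective he).injOn

/-! ### Last element with respect to an order of dimensions -/

noncomputable def lst {α : Type*} [Nonempty α] (π : α → ℕ) (w : Finset α) : α :=
  Classical.epsilon (fun l => l ∈ w ∧ ∀ j ∈ w, π j ≤ π l)

theorem lst_spec {α : Type*} [Nonempty α] (π : α → ℕ) (w : Finset α) (h : w ≠ ∅) :
    lst π w ∈ w ∧ ∀ j ∈ w, π j ≤ π (lst π w) := by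
  obtain ⟨l, hl⟩ := Finset.exists_max_image w π (Finset.nonempty_iff_ne_empty.2 h)
  exact Classical.epsilon_spec (p := fun l => l ∈ w ∧ ∀ j ∈ w, π j ≤ π l) ⟨l, hl⟩

/-- flip of a bit -/
def flip {α : Type*} [DecidableEq α] (w : Finset α) (j : α) : Finset α := symmDiff w {j}

theorem mem_flip {α : Type*} [DecidableEq α] (w : Finset α) (j i : α) :
    i ∈ flip w j ↔ (i ∈ w ∧ i ≠ j) ∨ (i = j ∧ j ∉ w) := by
  unfold flip
  simp only [Finset.mem_symmDiff, Finset.mem_singleton]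
  constructor
  · rintro (h | ⟨rfl, h⟩)
    · exact Or.inl h
    · exact Or.inr ⟨rfl, h⟩
  · rintro (h | ⟨rfl, h⟩)
    · exact Or.inl h
    · exact Or.inr ⟨rfl, h⟩

theorem flip_flip {α : Type*} [DecidableEq α] (w : Finset α) (j : α) : flip (flip w j) j = w := by
  unfold flip; rw [symmDiff_assoc, symmDiff_self]; simp

theorem flip_inj {α : Type*} [DecidableEq α] {w w' : Finset α} {j : α} (h : flip w j = flip w' j) :
    w = w' := by rw [← flip_flip w j, h, flip_flip]

theorem flip_ne {α : Type*} [DecidableEq α] (w : Finset α) (j : α) : flip w j ≠ w := by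
  intro h
  have := mem_flip w j j
  rw [h] at this
  tauto

theorem flip_of_mem {α : Type*} [DecidableEq α] {w : Finset α} {j : α} (h : j ∈ w) :
    flip w j = w.erase j := by
  ext i; rw [mem_flip, Finset.mem_erase]; tauto

theorem flip_of_not_mem {α : Type*} [DecidableEq α] {w : Finset α} {j : α} (h : j ∉ w) :
    flip w j = insert j w := by
  ext i; rw [mem_flip, Finset.mem_insert]
  constructor
  · tauto
  · rintro (rfl | h')
    · tauto
    · left; refine ⟨h', ?_⟩; rintro rfl; exact h h'

/-- if `l` is the last bit where `z` and `z0` differ, then after flipping it in `z` the last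
difference is earlier -/
theorem lst_flip_lt {α : Type*} [DecidableEq α] [Nonempty α] (π : α → ℕ) (hπ : Function.Injective π)
    (z z0 : Finset α) (h : symmDiff z z0 ≠ ∅)
    (h' : symmDiff (flip z (lst π (symmDiff z z0))) z0 ≠ ∅) :
    π (lst π (symmDiff (flip z (lst π (symmDiff z z0))) z0)) < π (lst π (symmDiff z z0)) := by
  set l := lst π (symmDiff z z0) with hl
  obtain ⟨h1, h2⟩ := lst_spec π _ h
  obtain ⟨h3, h4⟩ := lst_spec π _ h'
  rw [← hl] at h1 h2
  set l' := lst π (symmDiff (flip z l) z0) with hl'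
  have hmem : l' ∈ symmDiff z z0 ∧ l' ≠ l := by
    simp only [Finset.mem_symmDiff, mem_flip] at *
    by_cases hll : l' = l
    · rw [hll] at h3; tauto
    · tauto
  exact lt_of_le_of_ne (h2 _ hmem.1) (fun h => hmem.2 (hπ h))

/-! ### The graph -/

abbrev Vx (q P m : ℕ) := Finset (Fin q) × Finset (Fin P) × Finset (Fin m)

def fv {m : ℕ} (i : Fin m) : ℕ := i.val

theorem fv_inj {m : ℕ} : Function.Injective (fv : Fin m → ℕ) := Fin.val_injective

noncomputable def out {q P m : ℕ} [NeZero m] (pick : Finset (Fin q) → Fin q) (v : Vx q P m) :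
    Finset (Vx q P m) :=
  if v.2.2 = ∅ then
    ((Finset.univ \ v.1).image fun j => ((insert j v.1, v.2.1, ∅) : Vx q P m)) ∪
    ((Finset.univ \ v.2.1).image fun j => ((v.1, insert j v.2.1, ∅) : Vx q P m))
  else
    insert (v.1, v.2.1, flip v.2.2 (lst fv v.2.2))
      ((Finset.univ.filter fun j => (v.2.2.card = 1 → j ≠ pick v.1)).image
        fun j => (({j}, ∅, ∅) : Vx q P m))

def degP {q P m : ℕ} (v : Vx q P m) : ℕ :=
  if v.2.2 = ∅ then (q - v.1.card) + (P - v.2.1.card)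
  else if v.2.2.card = 1 then q else q + 1

theorem card_out_le {q P m : ℕ} [NeZero q] [NeZero m] (pick : Finset (Fin q) → Fin q)
    (v : Vx q P m) : (out pick v).card ≤ degP v := by
  unfold out degP
  split_ifs with h1 h2
  · refine (Finset.card_union_le _ _).trans (Nat.add_le_add ?_ ?_)
    · refine Finset.card_image_le.trans ?_
      rw [Finset.card_sdiff_of_subset (Finset.subset_univ _)]; simp
    · refine Finset.card_image_le.trans ?_
      rw [Finset.card_sdiff_of_subset (Finset.subset_univ _)]; simp
  · refine (Finset.card_insert_le _ _).trans ?_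
    have hq := NeZero.pos q
    have : (Finset.univ.filter fun j => (v.2.2.card = 1 → j ≠ pick v.1)).card ≤ q - 1 := by
      have h3 : (Finset.univ.filter fun j => (v.2.2.card = 1 → j ≠ pick v.1))
          ⊆ Finset.univ.erase (pick v.1) := by
        intro j hj
        simp only [Finset.mem_filter, Finset.mem_univ, true_and, Finset.mem_erase, and_true] at *
        exact hj h2
      refine (Finset.card_le_card h3).trans ?_
      rw [Finset.card_erase_of_mem (Finset.mem_univ _)]; simp
    have := (Finset.card_image_le (f := fun j => (({j}, ∅, ∅) : Vx q P m))).trans this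
    omega
  · refine (Finset.card_insert_le _ _).trans ?_
    refine Nat.add_le_add_right (Finset.card_image_le.trans ?_) 1
    exact (Finset.card_le_univ _).trans (by simp)

def Gr {q P m : ℕ} [NeZero m] (pick : Finset (Fin q) → Fin q) : SimpleGraph (Vx q P m) :=
  SimpleGraph.fromRel fun v w => w ∈ out pick v

section adj
variable {q P m : ℕ} [NeZero m] (pick : Finset (Fin q) → Fin q)

theorem adj_y (y : Finset (Fin q)) (z : Finset (Fin P)) (j : Fin q) :
    (Gr pick : SimpleGraph (Vx q P m)).Adj (flip y j, z, ∅) (y, z, ∅) := by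
  unfold Gr
  rw [SimpleGraph.fromRel_adj]
  refine ⟨fun h => flip_ne y j (congrArg Prod.fst h), ?_⟩
  by_cases hj : j ∈ y
  · left
    rw [flip_of_mem hj]
    simp only [out, if_true]
    apply Finset.mem_union_left
    rw [Finset.mem_image]
    exact ⟨j, by simp, by simp [Finset.insert_erase hj]⟩
  · right
    rw [flip_of_not_mem hj]
    simp only [out, if_true]
    apply Finset.mem_union_left
    rw [Finset.mem_image]
    exact ⟨j, by simp [hj], rfl⟩

theorem adj_z (y : Finset (Fin q)) (z : Finset (Fin P)) (j : Fin P) :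
    (Gr pick : SimpleGraph (Vx q P m)).Adj (y, flip z j, ∅) (y, z, ∅) := by
  unfold Gr
  rw [SimpleGraph.fromRel_adj]
  refine ⟨fun h => flip_ne z j (congrArg (fun v => v.2.1) h), ?_⟩
  by_cases hj : j ∈ z
  · left
    rw [flip_of_mem hj]
    simp only [out, if_true]
    apply Finset.mem_union_right
    rw [Finset.mem_image]
    exact ⟨j, by simp, by simp [Finset.insert_erase hj]⟩
  · right
    rw [flip_of_not_mem hj]
    simp only [out, if_true]
    apply Finset.mem_union_right
    rw [Finset.mem_image]
    exact ⟨j, by simp [hj], rfl⟩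

theorem adj_r (y : Finset (Fin q)) (z : Finset (Fin P)) (r : Finset (Fin m)) (hr : r ≠ ∅) :
    (Gr pick : SimpleGraph (Vx q P m)).Adj (y, z, flip r (lst fv r)) (y, z, r) := by
  unfold Gr
  rw [SimpleGraph.fromRel_adj]
  refine ⟨fun h => flip_ne r _ (congrArg (fun v => v.2.2) h), ?_⟩
  right
  simp [out, hr]

theorem adj_hub (y : Finset (Fin q)) (z : Finset (Fin P)) (r : Finset (Fin m)) (hr : r ≠ ∅)
    (j : Fin q) (hj : r.card = 1 → j ≠ pick y) :
    (Gr pick : SimpleGraph (Vx q P m)).Adj (y, z, r) ({j}, ∅, ∅) := by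
  unfold Gr
  rw [SimpleGraph.fromRel_adj]
  refine ⟨fun h => hr (congrArg (fun v => v.2.2) h), ?_⟩
  left
  unfold out
  rw [if_neg hr]
  apply Finset.mem_insert_of_mem
  rw [Finset.mem_image]
  exact ⟨j, by simpa using hj, rfl⟩

end adj

/-! ### Composition: from the level of `y` to the whole graph -/

section schemes
variable {q P m : ℕ} [NeZero P] [NeZero m] (pick : Finset (Fin q) → Fin q)

theorem compose (A : Finset (Vx q P m))
    (hA1 : ∀ v ∈ A, v.1 ≠ ∅)
    (hA2 : ∀ y z r, y ≠ ∅ → (∀ i ∈ r, fv i + 1 < m) → ((y, z, r) : Vx q P m) ∈ A)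
    (u : Vx q P m) (hu : u ∈ A)
    (ζ : Finset (Fin q) → Finset (Fin P)) (ρ : Finset (Fin q) → ℕ)
    (γ : Finset (Fin q) → Vx q P m)
    (h1 : ∀ y, y ≠ ∅ → (y, ζ y, ∅) ≠ u → 1 ≤ ρ y ∧ ρ y ≤ q ∧ (Gr pick).Adj (γ y) (y, ζ y, ∅) ∧
      (γ y = u ∨ ∃ y', y' ≠ ∅ ∧ γ y = (y', ζ y', ∅) ∧ (ρ y' < ρ y)))
    (h2 : ∀ y y', y ≠ ∅ → y' ≠ ∅ → (y, ζ y, ∅) ≠ u → (y', ζ y', ∅) ≠ u → γ y = γ y' → ρ y = ρ y' →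
      y = y') :
    Scheme (Gr pick) A u (q + P + m) := by
  classical
  let dz : Vx q P m → Fin P := fun v => lst fv (symmDiff v.2.1 (ζ v.1))
  let τ : Vx q P m → ℕ := fun v => if v = u then 0 else
    if v.2.2 ≠ ∅ then q + P + fv (lst fv v.2.2) + 1 else
    if symmDiff v.2.1 (ζ v.1) ≠ ∅ then q + fv (dz v) + 1 else ρ v.1
  let c : Vx q P m → Vx q P m := fun v =>
    if v.2.2 ≠ ∅ then (v.1, v.2.1, flip v.2.2 (lst fv v.2.2)) else
    if symmDiff v.2.1 (ζ v.1) ≠ ∅ then (v.1, flip v.2.1 (dz v), ∅) else γ v.1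
  have tau_u : τ u = 0 := by simp [τ]
  have tau_r : ∀ y z r, (y, z, r) ≠ u → r ≠ ∅ → τ (y, z, r) = q + P + fv (lst fv r) + 1 := by
    intro y z r h hr
    simp [τ, h, hr]
  have tau_z : ∀ y z, (y, z, ∅) ≠ u → symmDiff z (ζ y) ≠ ∅ →
      τ (y, z, ∅) = q + fv (lst fv (symmDiff z (ζ y))) + 1 := by
    intro y z h hr
    simp only [τ, h, dz]; simp [hr]
  have tau_y : ∀ y, (y, ζ y, ∅) ≠ u → τ (y, ζ y, ∅) = ρ y := by
    intro y h
    simp [τ, h]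
  have c_r : ∀ y z r, r ≠ ∅ → c (y, z, r) = (y, z, flip r (lst fv r)) := by
    intro y z r hr
    simp [c, hr]
  have c_z : ∀ y z, symmDiff z (ζ y) ≠ ∅ →
      c (y, z, ∅) = (y, flip z (lst fv (symmDiff z (ζ y))), ∅) := by
    intro y z hr
    simp only [c, dz]; simp [hr]
  have c_y : ∀ y, c (y, ζ y, ∅) = γ y := by
    intro y
    simp [c]
  have fvP : ∀ i : Fin P, fv i < P := fun i => i.2
  have fvm : ∀ i : Fin m, fv i < m := fun i => i.2
  have tau_root : ∀ y z, y ≠ ∅ → τ (y, z, ∅) ≤ q + P := by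
    intro y z hy
    by_cases hv : (y, z, ∅) = u
    · rw [hv, tau_u]; omega
    · by_cases hz : symmDiff z (ζ y) = ∅
      · have hz' : z = ζ y := symmDiff_eq_bot.1 hz
        subst hz'
        rw [tau_y y hv]
        have := (h1 y hy hv).2.1
        omega
      · rw [tau_z y z hv hz]
        have := fvP (lst fv (symmDiff z (ζ y)))
        omega
  have tau_rep : ∀ y, y ≠ ∅ → τ (y, ζ y, ∅) ≤ q := by
    intro y hy
    by_cases hv : (y, ζ y, ∅) = u
    · rw [hv, tau_u]; omega
    · rw [tau_y y hv]
      exact (h1 y hy hv).2.1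
  refine ⟨τ, c, tau_u, ?_, ?_⟩
  · rintro ⟨y, z, r⟩ hvA hvu
    have hy : y ≠ ∅ := hA1 _ hvA
    by_cases hr : r = ∅
    · subst hr
      by_cases hz : symmDiff z (ζ y) = ∅
      · have hz' : z = ζ y := symmDiff_eq_bot.1 hz
        subst hz'
        obtain ⟨a1, a2, a3, a4⟩ := h1 y hy hvu
        rw [c_y, tau_y y hvu]
        refine ⟨?_, a3, ?_, by omega⟩
        · rcases a4 with h | ⟨y', hy', h, _⟩
          · rw [h]; exact hu
          · rw [h]; exact hA2 _ _ _ hy' (by simp)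
        · rcases a4 with h | ⟨y', hy', h, hlt⟩
          · rw [h, tau_u]; omega
          · rw [h]
            by_cases hv : (y', ζ y', ∅) = u
            · rw [hv, tau_u]; omega
            · rw [tau_y y' hv]; exact hlt
      · rw [c_z y z hz, tau_z y z hvu hz]
        refine ⟨hA2 _ _ _ hy (by simp), adj_z _ _ _ _, ?_, ?_⟩
        · by_cases hv : ((y, flip z (lst fv (symmDiff z (ζ y))), ∅) : Vx q P m) = u
          · rw [hv, tau_u]; omega
          · by_cases hz2 : symmDiff (flip z (lst fv (symmDiff z (ζ y)))) (ζ y) = ∅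
            · have hz' := symmDiff_eq_bot.1 hz2
              rw [hz']
              have := tau_rep y hy
              omega
            · rw [tau_z _ _ hv hz2]
              have := lst_flip_lt fv fv_inj z (ζ y) hz hz2
              omega
        · have := fvP (lst fv (symmDiff z (ζ y)))
          omega
    · rw [c_r y z r hr, tau_r y z r hvu hr]
      obtain ⟨b1, b2⟩ := lst_spec fv r hr
      have hlt : ∀ i ∈ flip r (lst fv r), fv i < fv (lst fv r) := by
        intro i hi
        rw [flip_of_mem b1, Finset.mem_erase] at hi
        exact lt_of_le_of_ne (b2 i hi.2) (fun h => hi.1 (fv_inj h))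
      refine ⟨hA2 _ _ _ hy ?_, adj_r _ _ _ _ hr, ?_, ?_⟩
      · intro i hi
        have := hlt i hi
        have := fvm (lst fv r)
        omega
      · by_cases hv : ((y, z, flip r (lst fv r)) : Vx q P m) = u
        · rw [hv, tau_u]; omega
        · by_cases hr2 : flip r (lst fv r) = ∅
          · rw [hr2]
            have := tau_root y z hy
            omega
          · rw [tau_r _ _ _ hv hr2]
            have := hlt _ (lst_spec fv _ hr2).1
            omega
      · have := fvm (lst fv r)
        omega
  · rintro ⟨y, z, r⟩ hvA ⟨y', z', r'⟩ hvA' hvu hvu' hc hτ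
    have hy : y ≠ ∅ := hA1 _ hvA
    have hy' : y' ≠ ∅ := hA1 _ hvA'
    by_cases hr : r = ∅
    · subst hr
      have hle := tau_root y z hy
      have hr' : r' = ∅ := by
        by_contra hr'
        rw [tau_r _ _ _ hvu' hr'] at hτ
        omega
      subst hr'
      by_cases hz : symmDiff z (ζ y) = ∅
      · have hz' : z = ζ y := symmDiff_eq_bot.1 hz
        subst hz'
        have hle2 := tau_rep y hy
        have hz2 : symmDiff z' (ζ y') = ∅ := by
          by_contra hz2
          rw [tau_z _ _ hvu' hz2] at hτ
          omega
        have hz3 : z' = ζ y' := symmDiff_eq_bot.1 hz2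
        subst hz3
        rw [c_y, c_y] at hc
        rw [tau_y _ hvu, tau_y _ hvu'] at hτ
        rw [h2 y y' hy hy' hvu hvu' hc hτ]
      · rw [tau_z _ _ hvu hz] at hτ
        by_cases hz2 : symmDiff z' (ζ y') = ∅
        · have hz3 : z' = ζ y' := symmDiff_eq_bot.1 hz2
          subst hz3
          have := tau_rep y' hy'
          omega
        · rw [tau_z _ _ hvu' hz2] at hτ
          rw [c_z _ _ hz, c_z _ _ hz2] at hc
          have hl : lst fv (symmDiff z (ζ y)) = lst fv (symmDiff z' (ζ y')) := fv_inj (by omega)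
          simp only [Prod.mk.injEq] at hc
          obtain ⟨e1, e2, -⟩ := hc
          rw [hl] at e2
          rw [e1, flip_inj e2]
    · rw [tau_r _ _ _ hvu hr] at hτ
      by_cases hr' : r' = ∅
      · subst hr'
        have := tau_root y' z' hy'
        omega
      · rw [tau_r _ _ _ hvu' hr'] at hτ
        rw [c_r _ _ _ hr, c_r _ _ _ hr'] at hc
        have hl : lst fv r = lst fv r' := fv_inj (by omega)
        simp only [Prod.mk.injEq] at hc
        obtain ⟨e1, e2, e3⟩ := hc
        rw [hl] at e3
        rw [e1, e2, flip_inj e3]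

theorem exists_order_last (i : Fin q) : ∃ π : Fin q → ℕ, Function.Injective π ∧
    (∀ j, 1 ≤ π j ∧ π j ≤ q) ∧ ∀ j, j ≠ i → π j < π i := by
  have hq : 0 < q := i.pos
  refine ⟨fun j => (Equiv.swap i ⟨q - 1, by omega⟩ j).val + 1, ?_, ?_, ?_⟩
  · intro a b hab
    exact (Equiv.swap i ⟨q - 1, by omega⟩).injective (Fin.ext (by simpa using hab))
  · intro j
    have := (Equiv.swap i ⟨q - 1, by omega⟩ j).2
    simp only []
    omega
  · intro j hj
    have h1 := (Equiv.swap i ⟨q - 1, by omega⟩ j).2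
    have h2 : Equiv.swap i ⟨q - 1, by omega⟩ j ≠ Equiv.swap i ⟨q - 1, by omega⟩ i :=
      fun h => hj ((Equiv.swap i (⟨q - 1, by omega⟩ : Fin q)).injective h)
    rw [Equiv.swap_apply_left] at h2
    have h3 : (Equiv.swap i ⟨q - 1, by omega⟩ j).val ≠ q - 1 := fun h => h2 (Fin.ext h)
    simp only [Equiv.swap_apply_left]
    omega

theorem exists_order_first (i : Fin q) : ∃ π : Fin q → ℕ, Function.Injective π ∧
    (∀ j, 1 ≤ π j ∧ π j ≤ q) ∧ ∀ j, j ≠ i → π i < π j := by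
  obtain ⟨π, h1, h2, h3⟩ := exists_order_last i
  refine ⟨fun j => q + 1 - π j, ?_, ?_, ?_⟩
  · intro a b hab
    have := h2 a
    have := h2 b
    simp only [] at hab
    exact h1 (by omega)
  · intro j
    have := h2 j
    simp only []
    omega
  · intro j hj
    have := h3 j hj
    have := h2 j
    have := h2 i
    simp only []
    omega

variable [NeZero q]

theorem scheme_root (A : Finset (Vx q P m))
    (hA1 : ∀ v ∈ A, v.1 ≠ ∅)
    (hA2 : ∀ y z r, y ≠ ∅ → (∀ i ∈ r, fv i + 1 < m) → ((y, z, r) : Vx q P m) ∈ A)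
    (y0 : Finset (Fin q)) (z0 : Finset (Fin P)) (hu : ((y0, z0, ∅) : Vx q P m) ∈ A) :
    Scheme (Gr pick) A (y0, z0, ∅) (q + P + m) := by
  have hy0 : y0 ≠ ∅ := hA1 _ hu
  obtain ⟨i, hi⟩ := Finset.nonempty_iff_ne_empty.2 hy0
  obtain ⟨π, hπ, hπq, hlast⟩ := exists_order_last i
  have hne : ∀ y, ((y, z0, ∅) : Vx q P m) ≠ (y0, z0, ∅) → symmDiff y y0 ≠ ∅ := by
    intro y h h'
    exact h (by rw [symmDiff_eq_bot.1 h'])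
  refine compose pick A hA1 hA2 _ hu (fun _ => z0)
    (fun y => if symmDiff y y0 = ∅ then 0 else π (lst π (symmDiff y y0)))
    (fun y => (flip y (lst π (symmDiff y y0)), z0, ∅)) ?_ ?_
  · intro y hy hyu
    have hd := hne y hyu
    obtain ⟨b1, b2⟩ := lst_spec π _ hd
    simp only [if_neg hd]
    refine ⟨(hπq _).1, (hπq _).2, adj_y _ _ _ _, Or.inr ⟨_, ?_, rfl, ?_⟩⟩
    · intro h
      set l := lst π (symmDiff y y0)
      have hf : ∀ j, j ∉ flip y l := by rw [h]; simp
      have h3 : l ∈ y := by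
        have := hf l
        rw [mem_flip] at this
        tauto
      have h4 : l ∉ y0 := by
        rw [Finset.mem_symmDiff] at b1
        tauto
      have hil : i ≠ l := by rintro rfl; exact h4 hi
      have h5 : i ∉ y := by
        have := hf i
        rw [mem_flip] at this
        tauto
      have h6 := b2 i (by rw [Finset.mem_symmDiff]; tauto)
      have h7 := hlast l hil.symm
      omega
    · split_ifs with h
      · exact (hπq _).1
      · exact lst_flip_lt π hπ y y0 hd h
  · intro y y' hy hy' hyu hyu' hc ht
    simp only [if_neg (hne y hyu), if_neg (hne y' hyu')] at ht
    have hl := hπ ht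
    simp only [Prod.mk.injEq, and_true] at hc
    rw [hl] at hc
    exact flip_inj hc

/-- originators outside of the set of roots; `B` says whether the originator is a child of a root -/
theorem scheme_nonroot (A : Finset (Vx q P m))
    (hA1 : ∀ v ∈ A, v.1 ≠ ∅)
    (hA2 : ∀ y z r, y ≠ ∅ → (∀ i ∈ r, fv i + 1 < m) → ((y, z, r) : Vx q P m) ∈ A)
    (hpick : ∀ y, y ≠ ∅ → pick y ∈ y)
    (y0 : Finset (Fin q)) (z0 : Finset (Fin P)) (r0 : Finset (Fin m)) (hr0 : r0 ≠ ∅)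
    (hu : ((y0, z0, r0) : Vx q P m) ∈ A) :
    Scheme (Gr pick) A (y0, z0, r0) (q + P + m) := by
  classical
  have hy0 : y0 ≠ ∅ := hA1 _ hu
  set i := pick y0 with hi0
  have hi : i ∈ y0 := hpick y0 hy0
  obtain ⟨π, hπ, hπq, hfirst⟩ := exists_order_first i
  have hroot : ∀ y z, ((y, z, ∅) : Vx q P m) ≠ (y0, z0, r0) := by
    intro y z h
    simp only [Prod.mk.injEq] at h
    exact hr0 h.2.2.symm
  let up : Finset (Fin q) → Prop := fun y => r0.card = 1 ∧ i ∈ y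
  let base : Finset (Fin q) → Finset (Fin q) := fun y => if up y then y0 else ∅
  let ζ : Finset (Fin q) → Finset (Fin P) := fun y => if up y then z0 else ∅
  let D : Finset (Fin q) → Finset (Fin q) := fun y => symmDiff y (base y)
  let ρ : Finset (Fin q) → ℕ := fun y => if D y = ∅ then π i else π (lst π (D y))
  let γ : Finset (Fin q) → Vx q P m := fun y =>
    if D y = ∅ ∨ flip y (lst π (D y)) = ∅ then (y0, z0, r0)
    else (flip y (lst π (D y)), ζ y, ∅)
  -- the last dimension of difference is not `i` if the originator is a child
  have hDi : ∀ y, r0.card = 1 → i ∉ D y := by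
    intro y hB
    by_cases h : i ∈ y
    · simp only [D, base, up, hB, h, true_and, if_true, Finset.mem_symmDiff]
      tauto
    · simp only [D, base, up, hB, h, and_false, if_false, Finset.mem_symmDiff]
      simp
  have hup : ∀ y, D y ≠ ∅ → (up (flip y (lst π (D y))) ↔ up y) := by
    intro y hD
    simp only [up]
    constructor
    · rintro ⟨h1, h2⟩
      refine ⟨h1, ?_⟩
      have h3 := hDi y h1
      have h4 := (lst_spec π _ hD).1
      rw [mem_flip] at h2
      rcases h2 with h2 | h2
      · exact h2.1
      · rw [← h2.1] at h4; exact absurd h4 h3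
    · rintro ⟨h1, h2⟩
      refine ⟨h1, ?_⟩
      have h3 := hDi y h1
      have h4 := (lst_spec π _ hD).1
      rw [mem_flip]
      left
      refine ⟨h2, ?_⟩
      intro h
      rw [← h] at h4; exact absurd h4 h3
  -- a point from which a flip would lead to the empty set
  have hflip0 : ∀ y, D y ≠ ∅ → flip y (lst π (D y)) = ∅ →
      ¬ up y ∧ y = {lst π (D y)} := by
    intro y hD h
    have h1 : y = {lst π (D y)} := by
      apply flip_inj (j := lst π (D y))
      rw [h, flip_of_mem (Finset.mem_singleton_self _)]
      simp
    refine ⟨?_, h1⟩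
    intro hu
    have h2 := (hup y hD).2 hu
    rw [h] at h2
    simp [up] at h2
  have hD0 : ∀ y, y ≠ ∅ → D y = ∅ → up y ∧ y = y0 := by
    intro y hy h
    have h1 : y = base y := symmDiff_eq_bot.1 h
    by_cases hu : up y
    · refine ⟨hu, ?_⟩
      simpa only [base, hu, if_true] using h1
    · simp only [base, hu, if_false] at h1
      exact absurd h1 hy
  refine compose pick A hA1 hA2 _ hu ζ ρ γ ?_ ?_
  · intro y hy hyu
    by_cases hD : D y = ∅
    · obtain ⟨hu1, hyy⟩ := hD0 y hy hD
      simp only [ρ, γ, hD, if_true, true_or]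
      refine ⟨(hπq _).1, (hπq _).2, ?_, trivial⟩
      simp only [ζ, hu1, if_true]
      rw [hyy]
      have hB := hu1.1
      obtain ⟨l, hl⟩ := Finset.card_eq_one.1 hB
      have h3 := adj_r pick y0 z0 r0 hr0
      have h4 : flip r0 (lst fv r0) = ∅ := by
        have h5 := (lst_spec fv r0 hr0).1
        rw [flip_of_mem h5]
        have h6 : lst fv r0 = l := by
          apply Finset.mem_singleton.1
          rw [← hl]; exact h5
        rw [h6, hl]
        simp
      rw [h4] at h3
      exact h3.symm
    · by_cases hf : flip y (lst π (D y)) = ∅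
      · obtain ⟨hu1, hyy⟩ := hflip0 y hD hf
        simp only [ρ, γ, hD, hf, if_true, if_false, or_true]
        refine ⟨(hπq _).1, (hπq _).2, ?_, Or.inl trivial⟩
        simp only [ζ, hu1, if_false]
        rw [hyy]
        refine adj_hub pick y0 z0 r0 hr0 _ ?_
        intro hB h
        apply hDi y hB
        rw [← hi0] at h
        have h4 := (lst_spec π _ hD).1
        rw [← h]; exact h4
      · simp only [ρ, γ, hD, hf, if_false, or_self]
        refine ⟨(hπq _).1, (hπq _).2, adj_y _ _ _ _, Or.inr ⟨_, hf, ?_, ?_⟩⟩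
        · simp only [ζ, hup y hD]
        · have hbase : base (flip y (lst π (D y))) = base y := by
            simp only [base, hup y hD]
          split_ifs with hD2
          · obtain ⟨hu2, -⟩ := hD0 _ hf hD2
            apply hfirst
            intro h
            have h4 := (lst_spec π _ hD).1
            rw [h] at h4
            exact hDi y hu2.1 h4
          · simp only [D, hbase] at hD hD2 ⊢
            exact lst_flip_lt π hπ y (base y) hD hD2
  · intro y y' hy hy' hyu hyu' hc ht
    -- characterise the time
    have hcase : ∀ y, y ≠ ∅ → (D y = ∅ ∧ y = y0 ∧ r0.card = 1 ∧ γ y = (y0, z0, r0) ∧ ρ y = π i) ∨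
        (D y ≠ ∅ ∧ γ y = (y0, z0, r0) ∧ ρ y = π (lst π (D y)) ∧ y = {lst π (D y)}) ∨
        (D y ≠ ∅ ∧ γ y = (flip y (lst π (D y)), ζ y, ∅) ∧ ρ y = π (lst π (D y))) := by
      intro y hy
      by_cases hD : D y = ∅
      · left
        obtain ⟨a, b⟩ := hD0 y hy hD
        refine ⟨hD, b, a.1, ?_, ?_⟩
        · simp only [γ, hD, true_or, if_true]
        · simp only [ρ, hD, if_true]
      · right
        by_cases hf : flip y (lst π (D y)) = ∅
        · left
          refine ⟨hD, ?_, ?_, (hflip0 y hD hf).2⟩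
          · simp only [γ, hf, or_true, if_true]
          · simp only [ρ, hD, if_false]
        · right
          refine ⟨hD, ?_, ?_⟩
          · simp only [γ, hD, hf, or_self, if_false]
          · simp only [ρ, hD, if_false]
    have hlne : ∀ y, r0.card = 1 → D y ≠ ∅ → π i ≠ π (lst π (D y)) := by
      intro y hB hD h
      have h4 := (lst_spec π _ hD).1
      rw [← hπ h] at h4
      exact hDi y hB h4
    rcases hcase y hy with ⟨d, a1, a2, a3, a4⟩ | ⟨d, a1, a2, a3⟩ | ⟨d, a1, a2⟩ <;>
    rcases hcase y' hy' with ⟨d', b1, b2, b3, b4⟩ | ⟨d', b1, b2, b3⟩ | ⟨d', b1, b2⟩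
    · rw [a1, b1]
    · exact absurd (by rw [← a4, ht, b2]) (hlne y' a2 d')
    · exact absurd (by rw [← a4, ht, b2]) (hlne y' a2 d')
    · exact absurd (by rw [← b4, ← ht, a2]) (hlne y b2 d)
    · rw [a2, b2] at ht
      rw [a3, b3, hπ ht]
    · rw [a1, b1] at hc
      exact absurd hc.symm (hroot _ _)
    · exact absurd (by rw [← b4, ← ht, a2]) (hlne y b2 d)
    · rw [a1, b1] at hc
      exact absurd hc (hroot _ _)
    · rw [a2, b2] at ht
      rw [a1, b1, hπ ht] at hc
      simp only [Prod.mk.injEq] at hc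
      exact flip_inj hc.1

end schemes

/-! ### Counting -/

theorem two_mul_sum_compl (q : ℕ) :
    2 * ∑ y : Finset (Fin q), (q - y.card) = q * 2 ^ q := by
  have h1 : ∑ y : Finset (Fin q), (q - y.card) = ∑ y : Finset (Fin q), y.card := by
    apply Finset.sum_bij' (fun y _ => yᶜ) (fun y _ => yᶜ) <;> simp [Finset.card_compl]
  have h2 : ∑ y : Finset (Fin q), (q - y.card) + ∑ y : Finset (Fin q), y.card = q * 2 ^ q := by
    rw [← Finset.sum_add_distrib]
    rw [Finset.sum_congr rfl (g := fun _ => q)]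
    · simp [mul_comm]
    · intro y _
      have : y.card ≤ q := by simpa using Finset.card_le_univ y
      omega
  omega

theorem sum_r (m a b c : ℕ) :
    ∑ r : Finset (Fin m), (if r = ∅ then a else if r.card = 1 then b else c)
      = a + m * b + (2 ^ m - 1 - m) * c := by
  classical
  have h1 : ∀ r : Finset (Fin m), (if r = ∅ then a else if r.card = 1 then b else c)
      = (if r.card = 0 then a else 0) + (if r.card = 1 then b else 0)
        + (if ¬ r.card = 0 ∧ ¬ r.card = 1 then c else 0) := by
    intro r
    by_cases h0 : r = ∅
    · simp [h0]
    · have h0' : r.card ≠ 0 := by simpa using h0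
      by_cases h1 : r.card = 1
      · simp [h0, h1]
      · simp [h0, h1]
  have hc0 : (Finset.univ.filter fun r : Finset (Fin m) => r.card = 0).card = 1 := by
    rw [← Finset.powerset_univ, ← Finset.powersetCard_eq_filter, Finset.card_powersetCard]; simp
  have hc1 : (Finset.univ.filter fun r : Finset (Fin m) => r.card = 1).card = m := by
    rw [← Finset.powerset_univ, ← Finset.powersetCard_eq_filter, Finset.card_powersetCard]; simp
  have hc2 : (Finset.univ.filter fun r : Finset (Fin m) => ¬ r.card = 0 ∧ ¬ r.card = 1).card
      = 2 ^ m - 1 - m := by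
    have h3 : (Finset.univ.filter fun r : Finset (Fin m) => ¬ r.card = 0 ∧ ¬ r.card = 1)
        = (Finset.univ \ (Finset.univ.filter fun r : Finset (Fin m) => r.card = 0)) \
          (Finset.univ.filter fun r : Finset (Fin m) => r.card = 1) := by
      ext r; simp
    rw [h3, Finset.card_sdiff_of_subset, hc1, Finset.card_sdiff_of_subset (Finset.subset_univ _), hc0]
    · simp
    · intro r hr
      simp only [Finset.mem_filter, Finset.mem_univ, true_and, Finset.mem_sdiff] at *
      omega
  rw [Finset.sum_congr rfl (fun r _ => h1 r), Finset.sum_add_distrib, Finset.sum_add_distrib,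
    ← Finset.sum_filter, ← Finset.sum_filter, ← Finset.sum_filter, Finset.sum_const,
    Finset.sum_const, Finset.sum_const, hc0, hc1, hc2]
  simp

def full (q P m : ℕ) : Finset (Vx q P m) := (Finset.univ.erase ∅) ×ˢ (Finset.univ ×ˢ Finset.univ)

theorem card_full (q P m : ℕ) : (full q P m).card = (2 ^ q - 1) * (2 ^ P * 2 ^ m) := by
  unfold full
  rw [Finset.card_product, Finset.card_product, Finset.card_erase_of_mem (Finset.mem_univ _)]
  simp

def leaves (q P m : ℕ) (l : Fin m) : Finset (Vx q P m) :=
  (Finset.univ.erase ∅) ×ˢ (Finset.univ ×ˢ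
    (((Finset.univ.erase l).powerset.erase ∅).image (insert l)))

theorem card_leaves (q P m : ℕ) (l : Fin m) :
    (leaves q P m l).card = (2 ^ q - 1) * (2 ^ P * (2 ^ (m - 1) - 1)) := by
  unfold leaves
  rw [Finset.card_product, Finset.card_product, Finset.card_erase_of_mem (Finset.mem_univ _),
    Finset.card_image_of_injOn, Finset.card_erase_of_mem (Finset.empty_mem_powerset _),
    Finset.card_powerset, Finset.card_erase_of_mem (Finset.mem_univ _)]
  · simp
  · intro a ha b hb hab
    simp only [Finset.coe_erase, Set.mem_sdiff, Finset.mem_coe, Finset.mem_powerset] at ha hb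
    have ha' : l ∉ a := fun h => by simpa using ha.1 h
    have hb' : l ∉ b := fun h => by simpa using hb.1 h
    rw [← Finset.erase_insert ha', ← Finset.erase_insert hb', hab]

theorem mem_leaves {q P m : ℕ} {l : Fin m} {v : Vx q P m} (h : v ∈ leaves q P m l) :
    v.1 ≠ ∅ ∧ l ∈ v.2.2 ∧ 2 ≤ v.2.2.card := by
  unfold leaves at h
  simp only [Finset.mem_product, Finset.mem_erase, Finset.mem_univ, and_true, true_and,
    Finset.mem_image, Finset.mem_powerset] at h
  obtain ⟨h1, r, ⟨h2, h3⟩, h4⟩ := h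
  refine ⟨h1, ?_, ?_⟩
  · rw [← h4]; exact Finset.mem_insert_self _ _
  · have ha' : l ∉ r := fun h => by simpa using h3 h
    rw [← h4, Finset.card_insert_of_notMem ha']
    have := Finset.card_pos.2 (Finset.nonempty_iff_ne_empty.2 h2)
    omega

theorem sum_full (q P m : ℕ) :
    2 * (∑ v ∈ full q P m, (degP v : ℤ)) =
      2 * ((2 ^ q - 1) * 2 ^ P) * (m * q + (2 ^ m - 1 - m) * (q + 1))
      + (2 ^ q - 1) * (P * 2 ^ P) + 2 ^ P * (q * 2 ^ q - 2 * q) := by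
  have hm : m + 1 ≤ 2 ^ m := Nat.lt_two_pow_self
  have hm' : ((2 ^ m - 1 - m : ℕ) : ℤ) = 2 ^ m - 1 - m := by
    rw [Nat.cast_sub (by omega), Nat.cast_sub (by omega)]; push_cast; ring
  set X : ℤ := m * q + (2 ^ m - 1 - m) * (q + 1) with hX
  have e1 : ∀ (y : Finset (Fin q)) (z : Finset (Fin P)),
      ∑ r : Finset (Fin m), ((degP ((y, z, r) : Vx q P m) : ℕ) : ℤ)
        = ((q - y.card : ℕ) : ℤ) + ((P - z.card : ℕ) : ℤ) + X := by
    intro y z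
    have := sum_r m ((q - y.card) + (P - z.card)) q (q + 1)
    rw [← Nat.cast_sum]
    simp only [degP]
    rw [this]
    push_cast
    rw [hm', hX]
    ring
  have sP : 2 * ∑ z : Finset (Fin P), ((P - z.card : ℕ) : ℤ) = P * 2 ^ P := by
    have := two_mul_sum_compl P
    exact_mod_cast this
  have sq : 2 * ∑ y ∈ Finset.univ.erase (∅ : Finset (Fin q)), ((q - y.card : ℕ) : ℤ)
      = q * 2 ^ q - 2 * q := by
    have h1 : 2 * ∑ y : Finset (Fin q), ((q - y.card : ℕ) : ℤ) = q * 2 ^ q := by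
      have := two_mul_sum_compl q
      exact_mod_cast this
    have h2 := Finset.sum_erase_add (Finset.univ : Finset (Finset (Fin q)))
      (fun y => ((q - y.card : ℕ) : ℤ)) (Finset.mem_univ ∅)
    simp only [Finset.card_empty, Nat.sub_zero] at h2
    linarith
  have cP : ((Finset.univ : Finset (Finset (Fin P))).card : ℤ) = 2 ^ P := by simp
  have cq : ((Finset.univ.erase (∅ : Finset (Fin q))).card : ℤ) = 2 ^ q - 1 := by
    rw [Finset.card_erase_of_mem (Finset.mem_univ _)]
    rw [Nat.cast_sub (by simpa using Nat.one_le_two_pow)]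
    simp
  unfold full
  rw [Finset.sum_product]
  simp only [Finset.sum_product, e1, Finset.sum_add_distrib, Finset.sum_const, nsmul_eq_mul, cP, cq]
  rw [← Finset.mul_sum]
  linear_combination (2 ^ q - 1) * sP + 2 ^ P * sq

theorem construction (q P m n : ℕ) (hq : 1 ≤ q) (hP : 1 ≤ P) (hm : 1 ≤ m) (hn0 : 0 < n)
    (hn : n ≤ (2 ^ q - 1) * (2 ^ P * 2 ^ m))
    (hn' : (2 ^ q - 1) * (2 ^ P * 2 ^ m) - n ≤ (2 ^ q - 1) * (2 ^ P * (2 ^ (m - 1) - 1)))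
    (hlog : q + P + m ≤ Nat.clog 2 n) :
    2 * (broadcastFunction n : ℤ) ≤ 2 * (q + 1) * (n - (2 ^ q - 1) * 2 ^ P)
      - 2 * ((2 ^ q - 1) * 2 ^ P) * m
      + (2 ^ q - 1) * (P * 2 ^ P) + 2 ^ P * (q * 2 ^ q - 2 * q) := by
  classical
  have : NeZero q := ⟨by omega⟩
  have : NeZero P := ⟨by omega⟩
  have : NeZero m := ⟨by omega⟩
  let l : Fin m := ⟨m - 1, by omega⟩
  rw [← card_leaves q P m l] at hn'
  obtain ⟨D, hD, hDc⟩ := Finset.exists_subset_card_eq hn'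
  have hDf : D ⊆ full q P m := by
    intro v hv
    have := mem_leaves (hD hv)
    simp [full, this.1]
  set A := full q P m \ D with hA
  have hAc : A.card = n := by
    rw [hA, Finset.card_sdiff_of_subset hDf, hDc, card_full]
    omega
  have hA1 : ∀ v ∈ A, v.1 ≠ ∅ := by
    intro v hv
    have := (Finset.mem_sdiff.1 hv).1
    simpa [full] using this
  have hA2 : ∀ y z r, y ≠ ∅ → (∀ i ∈ r, fv i + 1 < m) → ((y, z, r) : Vx q P m) ∈ A := by
    intro y z r hy hr
    rw [hA, Finset.mem_sdiff]
    refine ⟨by simp [full, hy], ?_⟩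
    intro h
    have := hr l (mem_leaves (hD h)).2.1
    simp only [fv, l] at this
    omega
  have hpick : ∀ y : Finset (Fin q), ∃ i, y ≠ ∅ → i ∈ y := by
    intro y
    by_cases h : y = ∅
    · exact ⟨0, fun h' => absurd h h'⟩
    · obtain ⟨i, hi⟩ := Finset.nonempty_iff_ne_empty.2 h
      exact ⟨i, fun _ => hi⟩
  choose pick hpick using hpick
  have hs : ∀ u ∈ A, Scheme (Gr pick) A u (q + P + m) := by
    rintro ⟨y, z, r⟩ hu
    by_cases hr : r = ∅
    · subst hr
      exact scheme_root pick A hA1 hA2 y z hu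
    · exact scheme_nonroot pick A hA1 hA2 hpick y z r hr hu
  have hB := broadcastFunction_le (Gr pick) A n (q + P + m) hAc hn0 hlog hs
    (A.biUnion fun v => (out pick v).image fun w => s(v, w)) (by
      intro v hv w hw h
      unfold Gr at h
      rw [SimpleGraph.fromRel_adj] at h
      rw [Finset.mem_biUnion]
      rcases h.2 with h | h
      · exact ⟨v, hv, Finset.mem_image_of_mem _ h⟩
      · exact ⟨w, hw, Finset.mem_image.2 ⟨v, h, Sym2.eq_swap⟩⟩)
  have hle : broadcastFunction n ≤ ∑ v ∈ A, degP v := by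
    refine hB.trans (Finset.card_biUnion_le.trans (Finset.sum_le_sum ?_))
    intro v _
    exact Finset.card_image_le.trans (card_out_le pick v)
  have hle' : (broadcastFunction n : ℤ) ≤ ∑ v ∈ A, (degP v : ℤ) := by exact_mod_cast hle
  have hsplit := Finset.sum_sdiff hDf (f := fun v => (degP v : ℤ))
  have hDs : ∑ v ∈ D, (degP v : ℤ) = D.card * (q + 1) := by
    rw [Finset.sum_congr rfl (g := fun _ => ((q : ℤ) + 1))]
    · simp
    · intro v hv
      have h1 := (mem_leaves (hD hv)).2.2
      have h2 : v.2.2 ≠ ∅ := by intro h; rw [h] at h1; simp at h1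
      have h3 : v.2.2.card ≠ 1 := by omega
      simp [degP, h2, h3]
  have hDc' : (D.card : ℤ) = (2 ^ q - 1) * (2 ^ P * 2 ^ m) - n := by
    rw [hDc, Nat.cast_sub hn]
    push_cast [Nat.one_le_two_pow]
    ring
  have hfull := sum_full q P m
  rw [← hA] at hsplit
  rw [hDs, hDc'] at hsplit
  have : 2 * (broadcastFunction n : ℤ) ≤ 2 * (∑ v ∈ full q P m, (degP v : ℤ)) -
      2 * (((2 ^ q - 1) * (2 ^ P * 2 ^ m) - n) * (q + 1)) := by linarith
  rw [hfull] at this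
  refine this.trans (le_of_eq ?_)
  ring

/-- The vertex count conditions of the construction, and the resulting bound. -/
theorem construction' (t q p J m n : ℕ) (hq : 2 ≤ q) (hJ : 1 ≤ J) (hm : 3 ≤ m)
    (hsum : q + (p + J) + m = t + 1) (hn1 : 2 ^ t < n)
    (h1 : n + 2 ^ (t + 1 - q) ≤ 2 ^ (t + 1)) (h2 : 2 ^ (t + 1) < n + 2 * 2 ^ (t + 1 - q)) :
    2 * (broadcastFunction n : ℤ) ≤ 2 * (q + 1) * (n - (2 ^ q - 1) * 2 ^ (p + J))
      - 2 * ((2 ^ q - 1) * 2 ^ (p + J)) * m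
      + (2 ^ q - 1) * ((p + J : ℕ) * 2 ^ (p + J)) + 2 ^ (p + J) * (q * 2 ^ q - 2 * q) := by
  have e1 : t + 1 - q = (p + J) + m := by omega
  have e2 : 2 ^ (t + 1) = 2 ^ q * (2 ^ (p + J) * 2 ^ m) := by
    rw [← pow_add, ← pow_add]; congr 1; omega
  rw [e1, e2, pow_add 2 (p + J) m] at h1 h2
  have e3 : (2 ^ q - 1) * (2 ^ (p + J) * 2 ^ m) =
      2 ^ q * (2 ^ (p + J) * 2 ^ m) - 2 ^ (p + J) * 2 ^ m := by
    rw [Nat.sub_mul, one_mul]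
  refine construction q (p + J) m n (by omega) (by omega) (by omega) (by omega) ?_ ?_ ?_
  · rw [e3]; omega
  · have hm2 : 2 ^ m = 2 * 2 ^ (m - 1) := by
      rw [← pow_succ']; congr 1; omega
    have hw : 2 ^ 2 ≤ 2 ^ (m - 1) := Nat.pow_le_pow_right (by norm_num) (by omega)
    have ha : 2 ^ 2 ≤ 2 ^ q := Nat.pow_le_pow_right (by norm_num) hq
    have h3 : 2 ^ (p + J) * 2 ^ m ≤ (2 ^ q - 1) * (2 ^ (p + J) * (2 ^ (m - 1) - 1)) := by
      calc 2 ^ (p + J) * 2 ^ m ≤ 2 ^ (p + J) * (3 * (2 ^ (m - 1) - 1)) :=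
            Nat.mul_le_mul_left _ (by omega)
        _ = 3 * (2 ^ (p + J) * (2 ^ (m - 1) - 1)) := by ring
        _ ≤ _ := Nat.mul_le_mul_right _ (by omega)
    rw [e3]
    omega
  · rw [hsum]
    exact (Nat.lt_clog_iff_pow_lt (by norm_num)).2 hn1

/-- final numerical comparison, `a = 2 ^ q`, `b = 2 ^ p` -/
theorem numeric (t q p n a b h : ℤ) (ha : 4 ≤ a) (hb : 1 ≤ b) (hq : 2 ≤ q) (hp : 0 ≤ p)
    (ht : 2 * (q + p) + 1 ≤ t) (hh : 2 * h = a * b) :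
    2 * (q + 1) * (n - (a - 1) * (b * 8)) - 2 * ((a - 1) * (b * 8)) * (t - 2 - (q + p))
      + (a - 1) * ((p + 3) * (b * 8)) + (b * 8) * (q * a - 2 * q) ≤
    2 * (((q + p) + 1 - p) * n - (2 * t - (q + p) + 2 * p + 4) * h + t - (q + p) - (p - 2) * b) := by
  obtain ⟨s, hs⟩ : ∃ s, t = 2 * (q + p) + 1 + s := ⟨t - (2 * (q + p) + 1), by ring⟩
  have hs0 : 0 ≤ s := by linarith
  have h1 : 0 ≤ b * ((21 * a - 16) * (q - 2) + (3 * a - 10) * p + (14 * a - 16) * s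
      + (12 * a - 4)) := by
    apply mul_nonneg (by linarith)
    have h2 : 0 ≤ (21 * a - 16) * (q - 2) := mul_nonneg (by linarith) (by linarith)
    have h3 : 0 ≤ (3 * a - 10) * p := mul_nonneg (by linarith) hp
    have h4 : 0 ≤ (14 * a - 16) * s := mul_nonneg (by linarith) hs0
    linarith
  have h5 : 2 * ((2 * t - (q + p) + 2 * p + 4) * h) = (2 * t - (q + p) + 2 * p + 4) * (a * b) := by
    rw [← hh]; ring
  have h6 : 0 ≤ t - (q + p) := by linarith
  subst hs
  nlinarith [h1, h5, h6]

end BroadcastOdd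

/-- The odd case: for `t ≥ 7`, odd `n`, `2 ≤ k ≤ ⌈t/2⌉ - 1`, `N = (2^k - 1)·2^(t+1-k)` and
`2^t < n < N`, with `d = N - n`, `x = ⌊d / 2^(t+1-k)⌋` and `p = ⌊log₂ (x+1)⌋` if `x > 0`
(and `p = 0` if `x = 0`), the broadcast function satisfies
`B(n) ≤ (k+1-p)·n - (2t - k + 2p + 4)·2^(k-1) + t - k - (p-2)·2^p`. -/
theorem broadcastFunction_le_of_n_odd (t k n N d x p : ℕ) (ht : 7 ≤ t) (hodd : Odd n)
    (hk : 2 ≤ k) (hk' : k ≤ (t + 1) / 2 - 1) (hN : N = (2 ^ k - 1) * 2 ^ (t + 1 - k))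
    (hn1 : 2 ^ t < n) (hn2 : n < N)
    (hd : d = N - n) (hx : x = d / 2 ^ (t + 1 - k))
    (hp : p = if 0 < x then Nat.log 2 (x + 1) else 0) :
    (broadcastFunction n : ℤ) ≤
      (k + 1 - p) * n - (2 * t - k + 2 * p + 4) * 2 ^ (k - 1) + t - k - (p - 2) * 2 ^ p := by
  have hp' : p = Nat.log 2 (x + 1) := by
    rw [hp]
    split_ifs with h
    · rfl
    · have : x = 0 := by omega
      simp [this]
  have hpx1 : 2 ^ p ≤ x + 1 := by rw [hp']; exact Nat.pow_log_le_self 2 (by omega)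
  have hpx2 : x + 1 < 2 ^ (p + 1) := by rw [hp']; exact Nat.lt_pow_succ_log_self (by norm_num) _
  clear hp hp'
  set M := 2 ^ (t + 1 - k) with hM
  have hM0 : 0 < M := by positivity
  have hkM : 2 ^ k * M = 2 ^ (t + 1) := by
    rw [hM, ← pow_add]; congr 1; omega
  have hN' : N + M = 2 ^ (t + 1) := by
    have : 1 ≤ 2 ^ k := Nat.one_le_two_pow
    rw [hN, Nat.sub_mul, hkM, one_mul]
    have : 1 * M ≤ 2 ^ k * M := Nat.mul_le_mul_right _ this
    omega
  have hd1 : x * M ≤ d := by rw [hx]; exact Nat.div_mul_le_self _ _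
  have hd2 : d < (x + 1) * M := by
    have := Nat.lt_mul_div_succ d hM0
    rw [← hx] at this
    linarith
  have g1 : n + 2 ^ p * M ≤ 2 ^ (t + 1) := by
    have : 2 ^ p * M ≤ (x + 1) * M := Nat.mul_le_mul_right _ hpx1
    have h3 : (x + 1) * M = x * M + M := by ring
    omega
  have g2 : 2 ^ (t + 1) < n + 2 * (2 ^ p * M) := by
    have : (x + 1 + 1) * M ≤ 2 ^ (p + 1) * M := Nat.mul_le_mul_right _ hpx2
    have h3 : (x + 1 + 1) * M = (x + 1) * M + M := by ring
    have h4 : 2 ^ (p + 1) * M = 2 * (2 ^ p * M) := by ring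
    omega
  have hpk : p + 2 ≤ k := by
    by_contra hcon
    have h3 : 2 ^ (t - (t + 1 - k)) ≤ 2 ^ p := Nat.pow_le_pow_right (by norm_num) (by omega)
    have h4 : 2 ^ (t - (t + 1 - k)) * M ≤ 2 ^ p * M := Nat.mul_le_mul_right _ h3
    have h5 : 2 ^ (t - (t + 1 - k)) * M = 2 ^ t := by
      rw [hM, ← pow_add]; congr 1; omega
    have h6 : 2 ^ (t + 1) = 2 * 2 ^ t := by ring
    omega
  obtain ⟨q, rfl⟩ : ∃ q, k = q + p := ⟨k - p, by omega⟩
  have hpM : 2 ^ p * M = 2 ^ (t + 1 - q) := by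
    rw [hM, ← pow_add]; congr 1; omega
  rw [hpM] at g1 g2
  have hq : 2 ≤ q := by omega
  by_cases hc : t = 7 ∧ q + p = 3
  · obtain ⟨rfl, hqp⟩ := hc
    have hB := BroadcastOdd.construction' 7 q p 2 3 n hq (by norm_num) le_rfl (by omega) hn1 g1 g2
    have : p = 0 ∨ p = 1 := by omega
    rcases this with rfl | rfl
    · obtain rfl : q = 3 := by omega
      norm_num at hB ⊢
      linarith
    · obtain rfl : q = 2 := by omega
      norm_num at hB ⊢
      linarith
  · have hB := BroadcastOdd.construction' t q p 3 (t + 1 - (q + p + 3)) n hq (by norm_num)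
      (by omega) (by omega) hn1 g1 g2
    have hm : ((t + 1 - (q + p + 3) : ℕ) : ℤ) = t - 2 - (q + p) := by
      rw [Nat.cast_sub (by omega)]; push_cast; ring
    have ha : (4 : ℤ) ≤ 2 ^ q := by
      have : 2 ^ 2 ≤ 2 ^ q := Nat.pow_le_pow_right (by norm_num) hq
      exact_mod_cast this
    have hb : (1 : ℤ) ≤ 2 ^ p := one_le_pow₀ (by norm_num)
    have hh : 2 * (2 : ℤ) ^ (q + p - 1) = 2 ^ q * 2 ^ p := by
      rw [← pow_succ', ← pow_add]; congr 1; omega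
    have hnum := BroadcastOdd.numeric t q p n (2 ^ q) (2 ^ p) (2 ^ (q + p - 1)) ha hb
      (by exact_mod_cast hq) (by positivity) (by omega) hh
    have e8 : (2 : ℤ) ^ (p + 3) = 2 ^ p * 8 := by rw [pow_add]; norm_num
    rw [hm, e8] at hB
    push_cast at hB ⊢
    linarith
end
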